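/- arXiv:2304.06432 — 8 statements merged into one kernel-verified Lean document; each statement's English description precedes it below -/
import Mathlib

section
/- Let k be a field of characteristic zero and X = {1, 2, …, M} with 1 ≺ 2 ≺ ⋯ ≺ M. Then in the free algebra k⟨X⟩, for all natural numbers i₁, …, i_M: SH_{i_M,…,i₁} = Σ ((i₁+⋯+i_M)! / (t₁!⋯tₙ!)) · ∏_{m=1}^{n} (C(α_m)·E(α_m) / |α_m|!)^{t_m}, where the sum is over all n ≥ 0, all strictly decreasing tuples α₁ ≻ α₂ ≻ ⋯ ≻ αₙ of Lyndon words over X, and all tuples of positive integers (t₁, …, tₙ) such that Σ_{m=1}^{n} t_m·α_m(x) = i_x for every letter x ∈ X, the product being taken in this decreasing order of the α_m. -/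
/-- A nonempty word over a linearly ordered alphabet is a Lyndon word if it is
strictly lexicographically smaller than every nontrivial rotation of itself
(vacuously true for single letters). -/
def IsLyndon {X : Type*} [LinearOrder X] (w : List X) : Prop :=
  w ≠ [] ∧ ∀ u v : List X, u ≠ [] → v ≠ [] → w = u ++ v → List.Lex (· < ·) w (v ++ u)

/-!
Let `d` be the degree operator on series in commuting variables `t x` with coefficients in the
algebra, and let `F` be the product, in decreasing order, of the exponentials
`exp ((C(α) / |α|!) E(α) t ^ content α)` over all Lyndon words `α`. Its coefficients are the right
hand side of the theorem divided by `(∑ x, i x)!`, and the recursion for `SH` says that they satisfy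
the Euler equation `d F = (∑ x, E [x] t x) F`. As `d 1 = 0`, this follows from the operator identity
`(d - ∑ x, E [x] t x) F = F d`.

The identity is proved by Lazard elimination, moving the largest remaining Lyndon word `g` through
the operator. The other free generators `a` are then replaced by the words `a gⁿ`, whose elements
`E (a gⁿ)` are the iterated commutators of `E a` with `E g`, and a generator `w` always enters with
the weight `|w| C(w) / |w|!`. The recursion for `C` says that the weight of `a gⁿ` is that of `a`
times `(C(g) / |g|!) ^ n / n!`, the coefficient which conjugation by `exp ((C(g) / |g|!) E(g))`
produces; `g` itself is absorbed by the conjugate of `d`. When all Lyndon words have been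
eliminated, only `d` remains.
-/

namespace LyndonShirshov

open Finset
open IsNilpotent (exp exp_eq_sum exp_smul_eq_sum exp_add_of_commute)
open scoped Nat

section Words

variable {X : Type*}

theorem suffix_append_iff {s u v : List X} :
    s <:+ u ++ v ↔ s <:+ v ∨ ∃ t, t ≠ [] ∧ t <:+ u ∧ s = t ++ v := by
  constructor
  · rintro ⟨r, hr⟩
    rcases List.append_eq_append_iff.1 hr with ⟨t, rfl, rfl⟩ | ⟨t, rfl, rfl⟩
    · rcases eq_or_ne t [] with rfl | ht
      · exact .inl (List.suffix_refl _)
      · exact .inr ⟨t, ht, List.suffix_append r t, rfl⟩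
    · exact .inl (List.suffix_append t s)
  · rintro (h | ⟨t, -, h, rfl⟩)
    · exact h.trans (List.suffix_append u v)
    · exact (List.suffix_append_self_iff).2 h

/-- The power `gⁿ` in the free monoid of words. -/
def wordPow (g : List X) (n : ℕ) : List X := (List.replicate n g).flatten

@[simp] theorem wordPow_zero (g : List X) : wordPow g 0 = [] := rfl

@[simp] theorem wordPow_one (g : List X) : wordPow g 1 = g := by simp [wordPow]

theorem wordPow_add (g : List X) (m n : ℕ) : wordPow g (m + n) = wordPow g m ++ wordPow g n := by
  simp only [wordPow, ← List.replicate_append_replicate, List.flatten_append]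

theorem wordPow_succ (g : List X) (n : ℕ) : wordPow g (n + 1) = wordPow g n ++ g := by
  rw [wordPow_add, wordPow_one]

@[simp] theorem length_wordPow (g : List X) (n : ℕ) : (wordPow g n).length = n * g.length := by
  simp [wordPow]

theorem exists_eq_append_wordPow {g : List X} (hg : g ≠ []) (b : List X) :
    ∃ a n, b = a ++ wordPow g n ∧ ¬g <:+ a := by
  by_cases h : g <:+ b
  · obtain ⟨t, rfl⟩ := h
    have : t.length < (t ++ g).length := by simp [List.length_pos_iff.2 hg]
    obtain ⟨a, n, rfl, ha⟩ := exists_eq_append_wordPow hg t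
    exact ⟨a, n + 1, by rw [wordPow_succ, List.append_assoc], ha⟩
  · exact ⟨b, 0, by simp, h⟩
termination_by b.length

theorem append_wordPow_inj {g a b : List X} (ha : ¬g <:+ a) (hb : ¬g <:+ b) {m n : ℕ} :
    a ++ wordPow g m = b ++ wordPow g n ↔ a = b ∧ m = n := by
  refine ⟨fun h => ?_, fun ⟨hab, hmn⟩ => hab ▸ hmn ▸ rfl⟩
  induction m generalizing n with
  | zero =>
    cases n with
    | zero => simpa using h
    | succ n =>
      rw [wordPow_succ, wordPow_zero, List.append_nil, ← List.append_assoc] at h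
      exact absurd (h ▸ List.suffix_append _ g) ha
  | succ m ih =>
    cases n with
    | zero =>
      rw [wordPow_succ, wordPow_zero, List.append_nil, ← List.append_assoc] at h
      exact absurd (h ▸ List.suffix_append _ g) hb
    | succ n =>
      simp only [wordPow_succ, ← List.append_assoc, List.append_left_inj] at h
      simpa using ih h

variable [LinearOrder X]

theorem append_lt_append_left_iff (p : List X) {a b : List X} : p ++ a < p ++ b ↔ a < b :=
  StrictMono.lt_iff_lt fun _ _ => List.append_left_lt

theorem le_append (a b : List X) : a ≤ a ++ b :=
  not_lt.1 (List.le_append_left (l₁ := a) (l₂ := b))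

theorem append_lt_append_of_not_prefix :
    ∀ {a b : List X}, a < b → ¬a <+: b → ∀ c d, a ++ c < b ++ d
  | [], _, _, hp, _, _ => absurd List.nil_prefix hp
  | _ :: _, [], h, _, _, _ => absurd h (by simp)
  | x :: a, y :: b, h, hp, c, d => by
    rw [List.cons_append, List.cons_append, List.cons_lt_cons_iff]
    rcases List.cons_lt_cons_iff.1 h with hxy | ⟨rfl, hab⟩
    · exact .inl hxy
    · have hp' : ¬a <+: b := fun hab' => hp (by simpa using hab')
      exact .inr ⟨rfl, append_lt_append_of_not_prefix hab hp' c d⟩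

theorem append_lt_append_of_length_le {a b : List X} (h : a < b) (hl : b.length ≤ a.length)
    (c d : List X) : a ++ c < b ++ d :=
  append_lt_append_of_not_prefix h (fun hp => h.ne (hp.eq_of_length_le hl)) c d

end Words

section Lyndon

variable {X : Type*} [LinearOrder X]

theorem _root_.IsLyndon.lt_of_suffix {w v : List X} (hw : IsLyndon w) (hv : v <:+ w) (hv0 : v ≠ [])
    (hvw : v ≠ w) : w < v := by
  obtain ⟨u, rfl⟩ := hv
  have hu0 : u ≠ [] := by rintro rfl; exact hvw rfl
  have hrot : u ++ v < v ++ u := hw.2 u v hu0 hv0 rfl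
  by_contra hlt
  have hlt : v < u ++ v := lt_of_le_of_ne (not_lt.1 hlt) hvw
  by_cases hp : v <+: u ++ v
  · obtain ⟨s, hs⟩ := hp
    have hlen : s.length = u.length := by simpa [add_comm] using congrArg List.length hs
    have hs0 : s ≠ [] := by rintro rfl; exact hu0 (List.length_eq_zero_iff.1 hlen.symm)
    have hsu : s < u := by rwa [← hs, append_lt_append_left_iff] at hrot
    exact lt_asymm (hw.2 v s hv0 hs0 hs.symm) (append_lt_append_of_length_le hsu hlen.ge v v)
  · exact lt_asymm hrot (by simpa using append_lt_append_of_not_prefix hlt hp u [])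

theorem isLyndon_iff_forall_suffix {w : List X} :
    IsLyndon w ↔ w ≠ [] ∧ ∀ v, v <:+ w → v ≠ [] → v ≠ w → w < v := by
  refine ⟨fun h => ⟨h.1, fun v => h.lt_of_suffix⟩, fun ⟨h0, h⟩ => ⟨h0, ?_⟩⟩
  rintro u v hu hv rfl
  exact (h v (List.suffix_append u v) hv (by simpa using hu)).trans_le (le_append v u)

theorem _root_.IsLyndon.le_of_suffix {w v : List X} (hw : IsLyndon w) (hv : v <:+ w)
    (hv0 : v ≠ []) : w ≤ v := by
  rcases eq_or_ne v w with rfl | hvw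
  · exact le_rfl
  · exact (hw.lt_of_suffix hv hv0 hvw).le

theorem isLyndon_singleton (x : X) : IsLyndon [x] := by
  refine isLyndon_iff_forall_suffix.2 ⟨by simp, fun v hv hv0 hvx => ?_⟩
  rcases List.suffix_cons_iff.1 hv with h | h
  · exact absurd h hvx
  · exact absurd (List.suffix_nil.1 h) hv0

theorem _root_.IsLyndon.append {a b : List X} (ha : IsLyndon a) (hb : IsLyndon b) (hab : a < b) :
    IsLyndon (a ++ b) := by
  have hlt : a ++ b < b := by
    by_cases hp : a <+: b
    · obtain ⟨s, rfl⟩ := hp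
      have hs : s ≠ [] := by rintro rfl; simp at hab
      exact (append_lt_append_left_iff a).2
        (hb.lt_of_suffix (List.suffix_append a s) hs (by simpa using ha.1))
    · simpa using append_lt_append_of_not_prefix hab hp b []
  refine isLyndon_iff_forall_suffix.2 ⟨by simp [ha.1], fun v hv hv0 hvab => ?_⟩
  rcases suffix_append_iff.1 hv with hv | ⟨t, ht0, ht, rfl⟩
  · exact hlt.trans_le (hb.le_of_suffix hv hv0)
  · have hta : t ≠ a := by rintro rfl; exact hvab rfl
    exact append_lt_append_of_length_le (ha.lt_of_suffix ht ht0 hta) ht.length_le b b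

theorem _root_.IsLyndon.append_wordPow {a g : List X} (ha : IsLyndon a) (hg : IsLyndon g)
    (hag : a < g) (n : ℕ) : IsLyndon (a ++ wordPow g n) ∧ a ++ wordPow g n < g := by
  induction n with
  | zero => simpa using ⟨ha, hag⟩
  | succ n ih =>
    rw [wordPow_succ, ← List.append_assoc]
    have hly := ih.1.append hg ih.2
    exact ⟨hly, hly.lt_of_suffix (List.suffix_append _ g) hg.1
      fun h => ih.1.1 (List.self_eq_append_left.1 h)⟩

theorem _root_.IsLyndon.le_of_suffix_wordPow {g s : List X} (hg : IsLyndon g) (hs0 : s ≠ []) :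
    ∀ {n : ℕ}, s <:+ wordPow g n → g ≤ s
  | 0, hs => absurd (List.suffix_nil.1 hs) hs0
  | n + 1, hs => by
    rw [add_comm, wordPow_add, wordPow_one] at hs
    rcases suffix_append_iff.1 hs with hs | ⟨t, ht0, ht, rfl⟩
    · exact hg.le_of_suffix_wordPow hs0 hs
    · exact (hg.le_of_suffix ht ht0).trans (le_append t _)

theorem exists_isLyndon_suffix_le (u : List X) (hu : u ≠ []) :
    ∃ m, IsLyndon m ∧ m <:+ u ∧ m ≤ u := by
  by_cases hly : IsLyndon u
  · exact ⟨u, hly, List.suffix_refl u, le_rfl⟩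
  · simp only [isLyndon_iff_forall_suffix, not_and, not_forall, not_lt] at hly
    obtain ⟨v, hv, hv0, hvu, hle⟩ := hly hu
    have : v.length < u.length := hv.length_le.lt_of_ne fun h => hvu (hv.eq_of_length h)
    obtain ⟨m, hm, hmv, hmle⟩ := exists_isLyndon_suffix_le v hv0
    exact ⟨m, hm, hmv.trans hv, hmle.trans hle⟩
termination_by u.length

end Lyndon

section Elimination

variable {X : Type*}

/-- The minimal elements of a set of words for the suffix order. For an initial segment `I` of the
Lyndon words these are the free generators left over by Lazard elimination of the Lyndon words
outside `I`. -/
def suffixMinimal (I : Set (List X)) : Set (List X) := {a ∈ I | ∀ s ∈ I, s <:+ a → s = a}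

theorem mem_suffixMinimal_iff_of_agree {N : ℕ} {I J : Set (List X)} {a : List X}
    (h : ∀ w, w ∈ J ↔ w ∈ I ∧ w.length ≤ N) :
    a ∈ suffixMinimal J ↔ a ∈ suffixMinimal I ∧ a.length ≤ N := by
  constructor
  · rintro ⟨haJ, ha⟩
    obtain ⟨haI, haN⟩ := (h a).1 haJ
    exact ⟨⟨haI, fun s hs hsa => ha s ((h s).2 ⟨hs, hsa.length_le.trans haN⟩) hsa⟩, haN⟩
  · rintro ⟨⟨haI, ha⟩, haN⟩
    exact ⟨(h a).2 ⟨haI, haN⟩, fun s hs => ha s ((h s).1 hs).1⟩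

variable [LinearOrder X]

/-- The Lyndon words that are at most `g`. -/
def lyndonIic (g : List X) : Set (List X) := {w | IsLyndon w ∧ w ≤ g}

/-- The Lyndon words that are strictly smaller than `g`. -/
def lyndonIio (g : List X) : Set (List X) := {w | IsLyndon w ∧ w < g}

theorem suffixMinimal_setOf_isLyndon :
    suffixMinimal {w : List X | IsLyndon w} = Set.range fun x => [x] := by
  ext w
  constructor
  · rintro ⟨hw, hmin⟩
    have hlast : [w.getLast hw.1] <:+ w := ⟨_, List.dropLast_append_getLast hw.1⟩
    exact ⟨_, hmin _ (isLyndon_singleton _) hlast⟩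
  · rintro ⟨x, rfl⟩
    refine ⟨isLyndon_singleton x, fun s hs hsx => ?_⟩
    exact (List.suffix_cons_iff.1 hsx).resolve_right fun h => hs.1 (List.suffix_nil.1 h)

theorem self_mem_suffixMinimal_lyndonIic {g : List X} (hg : IsLyndon g) :
    g ∈ suffixMinimal (lyndonIic g) := by
  refine ⟨⟨hg, le_rfl⟩, fun s hs hsg => by_contra fun hne => ?_⟩
  exact hs.2.not_gt (hg.lt_of_suffix hsg hs.1.1 hne)

theorem append_wordPow_mem_suffixMinimal {g a : List X} (hg : IsLyndon g)
    (ha : a ∈ suffixMinimal (lyndonIic g)) (hag : a ≠ g) (n : ℕ) :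
    a ++ wordPow g n ∈ suffixMinimal (lyndonIio g) := by
  have halt : a < g := ha.1.2.lt_of_ne hag
  refine ⟨ha.1.1.append_wordPow hg halt n, fun s hs hsa => ?_⟩
  rcases suffix_append_iff.1 hsa with hsg | ⟨t, ht0, hta, rfl⟩
  · exact absurd hs.2 (hg.le_of_suffix_wordPow hs.1.1 hsg).not_gt
  · obtain ⟨m, hm, hmt, hmle⟩ := exists_isLyndon_suffix_le t ht0
    have hmg : m ≤ g := hmle.trans ((le_append t _).trans hs.2.le)
    have hma : m = a := ha.2 m ⟨hm, hmg⟩ (hmt.trans hta)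
    rw [hta.eq_of_length_le (hma ▸ hmt.length_le)]

theorem exists_eq_append_wordPow_of_mem {g b : List X} (hg : IsLyndon g)
    (hb : b ∈ suffixMinimal (lyndonIio g)) :
    ∃ a ∈ suffixMinimal (lyndonIic g), a ≠ g ∧ ∃ n, a ++ wordPow g n = b := by
  obtain ⟨a, n, rfl, hga⟩ := exists_eq_append_wordPow hg.1 b
  have ha0 : a ≠ [] := by
    rintro rfl
    exact (hg.le_of_suffix_wordPow hb.1.1.1 (List.suffix_refl (wordPow g n))).not_gt hb.1.2
  have eq_of_suffix {s : List X} (hs : IsLyndon s) (hsg : s < g) (hsa : s <:+ a) : s = a :=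
    List.append_cancel_right <|
      hb.2 _ (hs.append_wordPow hg hsg n) (List.suffix_append_self_iff.2 hsa)
  obtain ⟨m, hm, hma, hmle⟩ := exists_isLyndon_suffix_le a ha0
  have hag : a < g := (le_append a _).trans_lt hb.1.2
  obtain rfl := eq_of_suffix hm (hmle.trans_lt hag) hma
  refine ⟨m, ⟨⟨hm, hag.le⟩, fun s hs hsm => ?_⟩, hag.ne, n, rfl⟩
  exact eq_of_suffix hs.1 (hs.2.lt_of_ne (by rintro rfl; exact hga hsm)) hsm

theorem append_wordPow_inj_of_mem {g a b : List X} (hg : IsLyndon g)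
    (ha : a ∈ suffixMinimal (lyndonIic g)) (hag : a ≠ g)
    (hb : b ∈ suffixMinimal (lyndonIic g)) (hbg : b ≠ g) {m n : ℕ} :
    a ++ wordPow g m = b ++ wordPow g n ↔ a = b ∧ m = n :=
  append_wordPow_inj (fun h => hag (ha.2 g ⟨hg, le_rfl⟩ h).symm)
    fun h => hbg (hb.2 g ⟨hg, le_rfl⟩ h).symm

theorem length_le_of_append_mem_suffixMinimal {g u s : List X} (hg : IsLyndon g)
    (hug : u ++ g ∈ suffixMinimal (lyndonIio g)) (hs : IsLyndon s) (hsug : s <:+ u ++ g)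
    (hne : s ≠ u ++ g) : s.length ≤ g.length := by
  by_contra! hlt
  have hgs : g <:+ s := List.suffix_of_suffix_length_le (List.suffix_append u g) hsug hlt.le
  have hsg : s < g := hs.lt_of_suffix hgs hg.1 (by rintro rfl; exact hlt.false)
  exact hne (hug.2 s ⟨hs, hsg⟩ hsug)

end Elimination

section Factorization

variable {X : Type*}

/-- The word `g₁ ^ m₁ g₂ ^ m₂ ⋯` written by a list of pairs `(gⱼ, mⱼ)`. -/
def word (L : List (List X × ℕ)) : List X := (L.map fun p => wordPow p.1 p.2).flatten

@[simp] theorem word_nil : word ([] : List (List X × ℕ)) = [] := rfl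

theorem word_cons (p : List X × ℕ) (L : List (List X × ℕ)) :
    word (p :: L) = wordPow p.1 p.2 ++ word L := by
  simp only [word, List.map_cons, List.flatten_cons]

theorem word_concat (L : List (List X × ℕ)) (g : List X) (n : ℕ) :
    word (L ++ [(g, n)]) = word L ++ wordPow g n := by
  simp only [word, List.map_append, List.flatten_append, List.map_singleton, List.flatten_singleton]

variable [LinearOrder X]

/-- The list of pairs `(αⱼ, tⱼ)` of a Chen–Fox–Lyndon factorization: the `αⱼ` are strictly
decreasing Lyndon words, with multiplicities `tⱼ ≥ 1`. -/
structure IsFactorList (L : List (List X × ℕ)) : Prop where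
  isLyndon : ∀ p ∈ L, IsLyndon p.1
  one_le : ∀ p ∈ L, 1 ≤ p.2
  pairwise : L.Pairwise fun p q => q.1 < p.1

theorem isFactorList_nil : IsFactorList ([] : List (List X × ℕ)) :=
  ⟨by simp, by simp, List.Pairwise.nil⟩

theorem isFactorList_cons {p : List X × ℕ} {L : List (List X × ℕ)} :
    IsFactorList (p :: L) ↔ (IsLyndon p.1 ∧ 1 ≤ p.2 ∧ ∀ q ∈ L, q.1 < p.1) ∧ IsFactorList L := by
  constructor
  · rintro ⟨h₁, h₂, h₃⟩
    rw [List.forall_mem_cons] at h₁ h₂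
    rw [List.pairwise_cons] at h₃
    exact ⟨⟨h₁.1, h₂.1, h₃.1⟩, h₁.2, h₂.2, h₃.2⟩
  · rintro ⟨⟨h₁, h₂, h₃⟩, hL⟩
    exact ⟨List.forall_mem_cons.2 ⟨h₁, hL.isLyndon⟩, List.forall_mem_cons.2 ⟨h₂, hL.one_le⟩,
      List.pairwise_cons.2 ⟨h₃, hL.pairwise⟩⟩

theorem IsFactorList.concat {L : List (List X × ℕ)} (hL : IsFactorList L) {g : List X}
    (hg : IsLyndon g) (hlt : ∀ p ∈ L, g < p.1) {n : ℕ} (hn : 1 ≤ n) :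
    IsFactorList (L ++ [(g, n)]) where
  isLyndon := by simpa [or_imp, forall_and] using ⟨fun a b => hL.isLyndon (a, b), hg⟩
  one_le := by simpa [or_imp, forall_and] using ⟨fun a b => hL.one_le (a, b), hn⟩
  pairwise := List.pairwise_append.2 ⟨hL.pairwise, by simp, by simpa using hlt⟩

theorem isFactorList_iff_isChain {L : List (List X × ℕ)} :
    IsFactorList L ↔
      (∀ p ∈ L, IsLyndon p.1 ∧ 1 ≤ p.2) ∧ L.IsChain fun p q => List.Lex (· < ·) q.1 p.1 := by
  have : IsTrans (List X × ℕ) fun p q => q.1 < p.1 := ⟨fun _ _ _ hqp hrq => hrq.trans hqp⟩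
  have hchain : (L.IsChain fun p q => List.Lex (· < ·) q.1 p.1) ↔ L.Pairwise fun p q => q.1 < p.1 :=
    List.isChain_iff_pairwise (R := fun p q : List X × ℕ => q.1 < p.1)
  rw [hchain]
  exact ⟨fun h => ⟨fun p hp => ⟨h.isLyndon p hp, h.one_le p hp⟩, h.pairwise⟩,
    fun h => ⟨fun p hp => (h.1 p hp).1, fun p hp => (h.1 p hp).2, h.2⟩⟩

theorem IsFactorList.eq_nil_of_word_eq_nil {L : List (List X × ℕ)} (hL : IsFactorList L)
    (h : word L = []) : L = [] := by
  rcases L with _ | ⟨p, L⟩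
  · rfl
  · obtain ⟨⟨hg, hm, -⟩, -⟩ := isFactorList_cons.1 hL
    have := congrArg List.length h
    simp only [word_cons, List.length_append, length_wordPow, List.length_nil] at this
    have := Nat.mul_pos hm (List.length_pos_iff.2 hg.1)
    omega

theorem IsFactorList.length_le_and_le {L : List (List X × ℕ)} (hL : IsFactorList L)
    {p : List X × ℕ} (hp : p ∈ L) : p.1.length ≤ (word L).length ∧ p.2 ≤ (word L).length := by
  have hle : p.2 * p.1.length ≤ (word L).length := by
    rw [← length_wordPow]
    exact (List.sublist_flatten_of_mem
      (List.mem_map_of_mem (f := fun p : List X × ℕ => wordPow p.1 p.2) hp)).length_le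
  exact ⟨(Nat.le_mul_of_pos_left _ (hL.one_le p hp)).trans hle,
    (Nat.le_mul_of_pos_right _ (List.length_pos_iff.2 (hL.isLyndon p hp).1)).trans hle⟩

theorem IsFactorList.exists_word_eq_append {L : List (List X × ℕ)} (hL : IsFactorList L)
    {d : List X} (hd : IsLyndon d) : ∃ L', IsFactorList L' ∧ word L' = d ++ word L := by
  induction L generalizing d with
  | nil => exact ⟨[(d, 1)], isFactorList_cons.2 ⟨⟨hd, le_rfl, by simp⟩, hL⟩, by simp [word_cons]⟩
  | cons p L ih =>
    obtain ⟨⟨hg, hm, hlt⟩, hL'⟩ := isFactorList_cons.1 hL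
    obtain ⟨g, m⟩ := p
    rcases lt_trichotomy d g with hdg | rfl | hgd
    · obtain ⟨L', h, hword⟩ := ih hL' (hd.append_wordPow hg hdg m).1
      exact ⟨L', h, by rw [hword, word_cons, List.append_assoc]⟩
    · refine ⟨(d, 1 + m) :: L, isFactorList_cons.2 ⟨⟨hd, by simp, hlt⟩, hL'⟩, ?_⟩
      simp only [word_cons, wordPow_add, wordPow_one, List.append_assoc]
    · refine ⟨(d, 1) :: (g, m) :: L, isFactorList_cons.2 ⟨⟨hd, le_rfl, ?_⟩, hL⟩,
        by simp [word_cons]⟩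
      exact List.forall_mem_cons.2 ⟨hgd, fun q hq => (hlt q hq).trans hgd⟩

theorem exists_isFactorList_word_eq (w : List X) : ∃ L, IsFactorList L ∧ word L = w := by
  induction w with
  | nil => exact ⟨[], isFactorList_nil, rfl⟩
  | cons x w ih =>
    obtain ⟨L, hL, rfl⟩ := ih
    exact hL.exists_word_eq_append (isLyndon_singleton x)

theorem IsFactorList.exists_suffix_le {L : List (List X × ℕ)} (hL : IsFactorList L)
    {p : List X × ℕ} (hp : p ∈ L) : ∃ s, IsLyndon s ∧ s <:+ word L ∧ s ≤ p.1 := by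
  induction L generalizing p with
  | nil => simp at hp
  | cons q L ih =>
    obtain ⟨⟨hq, hm, hlt⟩, hL'⟩ := isFactorList_cons.1 hL
    have lift {r} (hr : r ∈ L) : ∃ s, IsLyndon s ∧ s <:+ word (q :: L) ∧ s ≤ r.1 := by
      obtain ⟨s, hs, hsL, hsr⟩ := ih hL' hr
      exact ⟨s, hs, hsL.trans (word_cons q L ▸ List.suffix_append _ _), hsr⟩
    rcases List.mem_cons.1 hp with rfl | hp
    · rcases L with _ | ⟨r, L⟩
      · obtain ⟨m, hm⟩ := Nat.exists_eq_add_of_le' hm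
        exact ⟨p.1, hq, by simp [word_cons, hm, wordPow_succ], le_rfl⟩
      · obtain ⟨s, hs, hsL, hsr⟩ := lift List.mem_cons_self
        exact ⟨s, hs, hsL, hsr.trans (hlt r List.mem_cons_self).le⟩
    · exact lift hp

theorem IsFactorList.lt_of_cons_word_mem_suffixMinimal {L : List (List X × ℕ)}
    (hL : IsFactorList L) {x : X} {g : List X}
    (h : x :: word L ∈ suffixMinimal (lyndonIic g)) {p : List X × ℕ} (hp : p ∈ L) : g < p.1 := by
  by_contra! hpg
  obtain ⟨s, hs, hsL, hsp⟩ := hL.exists_suffix_le hp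
  have hsx : s = x :: word L := h.2 s ⟨hs, hsp.trans hpg⟩ (hsL.trans (List.suffix_cons x _))
  simpa [hsx] using hsL.length_le

end Factorization

section Coefficients

variable {X : Type*} [LinearOrder X] {k : Type*} [Field k]

/-- The recursive characterization of the Lyndon coefficients `C(α)`. -/
structure IsLyndonCoeff (C : List X → k) : Prop where
  singleton : ∀ x, C [x] = 1
  cons_word : ∀ (x : X) (L : List (List X × ℕ)),
    IsFactorList L → IsLyndon (x :: word L) → word L ≠ [] →
    C (x :: word L) =
      ((word L).length ! : k) / (L.map fun p => (p.1.length ! : k) ^ p.2 * (p.2 ! : k)).prod *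
        (L.map fun p => C p.1 ^ p.2).prod

/-- The normalized Lyndon coefficient `C(α) / |α|!`. -/
def normCoeff (C : List X → k) (w : List X) : k := C w / (w.length ! : k)

variable [CharZero k] {C : List X → k}

theorem IsLyndonCoeff.length_mul_normCoeff_cons_word (hC : IsLyndonCoeff C) {x : X}
    {L : List (List X × ℕ)} (hL : IsFactorList L) (hx : IsLyndon (x :: word L)) :
    ((x :: word L).length : k) * normCoeff C (x :: word L) =
      (L.map fun p => normCoeff C p.1 ^ p.2 / (p.2 ! : k)).prod := by
  rcases eq_or_ne (word L) [] with h | h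
  · rw [hL.eq_nil_of_word_eq_nil h]
    simp [normCoeff, hC.singleton]
  · have hfac : (((word L).length + 1 : ℕ) : k) / ((word L).length + 1) ! =
        ((word L).length ! : k)⁻¹ := by
      rw [Nat.factorial_succ, Nat.cast_mul,
        div_mul_cancel_left₀ (Nat.cast_ne_zero.2 (Nat.succ_ne_zero _))]
    have hfac' : ((word L).length ! : k) ≠ 0 := Nat.cast_ne_zero.2 (Nat.factorial_ne_zero _)
    have hprod : (L.map fun p => normCoeff C p.1 ^ p.2 / (p.2 ! : k)).prod =
        (L.map fun p => C p.1 ^ p.2).prod /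
          (L.map fun p => (p.1.length ! : k) ^ p.2 * (p.2 ! : k)).prod := by
      simp only [normCoeff, div_pow, div_div, ← Multiset.prod_coe, ← Multiset.map_coe,
        Multiset.prod_map_div]
    rw [hprod, normCoeff, mul_div_left_comm, List.length_cons, hfac, hC.cons_word x L hL hx h]
    field_simp

theorem IsLyndonCoeff.length_mul_normCoeff_append_wordPow (hC : IsLyndonCoeff C) {a g : List X}
    (hg : IsLyndon g) (ha : a ∈ suffixMinimal (lyndonIic g)) (hag : a ≠ g) (n : ℕ) :
    ((a ++ wordPow g n).length : k) * normCoeff C (a ++ wordPow g n) =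
      (a.length : k) * normCoeff C a * (normCoeff C g ^ n / (n ! : k)) := by
  rcases n with _ | n
  · simp
  · obtain ⟨x, w, rfl⟩ := List.exists_cons_of_ne_nil ha.1.1.1
    obtain ⟨L, hL, rfl⟩ := exists_isFactorList_word_eq w
    have hLg := hL.concat hg (fun p => hL.lt_of_cons_word_mem_suffixMinimal ha) n.succ_pos
    have hword : x :: word L ++ wordPow g (n + 1) = x :: word (L ++ [(g, n + 1)]) := by
      rw [word_concat, List.cons_append]
    have hly : IsLyndon (x :: word (L ++ [(g, n + 1)])) :=
      hword ▸ (ha.1.1.append_wordPow hg (ha.1.2.lt_of_ne hag) (n + 1)).1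
    rw [hword, hC.length_mul_normCoeff_cons_word hLg hly,
      hC.length_mul_normCoeff_cons_word hL ha.1.1, List.map_append, List.prod_append,
      List.map_singleton, List.prod_singleton]

end Coefficients

section Exponential

variable {R : Type*} [Ring R] [Algebra ℚ R]

theorem mul_exp_eq_exp_mul_sum {b : R} (hb : IsNilpotent b) {a : ℕ → R}
    (ha : ∀ n, a (n + 1) = a n * b - b * a n) {K : ℕ} (hK : a K = 0) :
    a 0 * exp b = exp b * ∑ n ∈ range K, (n ! : ℚ)⁻¹ • a n := by
  have hL : IsNilpotent (LinearMap.mulLeft ℚ b) := (LinearMap.isNilpotent_mulLeft_iff ℚ b).2 hb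
  have hR : IsNilpotent (LinearMap.mulRight ℚ b) := (LinearMap.isNilpotent_mulRight_iff ℚ b).2 hb
  have hcomm := LinearMap.commute_mulLeft_right (R := ℚ) b b
  set D := LinearMap.mulRight ℚ b - LinearMap.mulLeft ℚ b with hD
  have hD_nil : IsNilpotent D := hcomm.symm.isNilpotent_sub hR hL
  have hD_comm : Commute (LinearMap.mulLeft ℚ b) D := hcomm.sub_right (Commute.refl _)
  have hD_pow (n : ℕ) : (D ^ n) (a 0) = a n := by
    induction n with
    | zero => rfl
    | succ n ih => rw [pow_succ', Module.End.mul_apply, ih, ha n, hD]; rfl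
  obtain ⟨m, hm⟩ := hb
  have hexpR : exp (LinearMap.mulRight ℚ b) (a 0) = a 0 * exp b := by
    rw [exp_eq_sum hm, exp_eq_sum (k := m) (by rw [LinearMap.pow_mulRight, hm]; simp)]
    simp [LinearMap.sum_apply, mul_sum]
  have hexpL (y : R) : exp (LinearMap.mulLeft ℚ b) y = exp b * y := by
    rw [exp_eq_sum hm, exp_eq_sum (k := m) (by rw [LinearMap.pow_mulLeft, hm]; simp)]
    simp [LinearMap.sum_apply, sum_mul]
  have hexpD : exp D (a 0) = ∑ n ∈ range K, (n ! : ℚ)⁻¹ • a n := by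
    have := exp_smul_eq_sum (M := R) (m := a 0) (k := K) (by simp [hD_pow, hK]) hD_nil
    simpa only [Module.End.smul_def, hD_pow] using this
  rw [← hexpR, ← hexpD, ← hexpL, ← Module.End.mul_apply, ← exp_add_of_commute hD_comm hL hD_nil, hD,
    add_sub_cancel]

theorem sub_mul_exp_eq_exp_mul {b d e : R} (hb : IsNilpotent b) (hd : d * b - b * d = e)
    (he : Commute b e) : (d - e) * exp b = exp b * d := by
  have hexp_e : e * exp b = exp b * e := by
    simpa using mul_exp_eq_exp_mul_sum hb (a := fun n => if n = 0 then e else 0) (K := 1)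
      (by simp [he.eq]) (by simp)
  have hexp_d : d * exp b = exp b * (d + e) := by
    simpa [sum_range_succ] using mul_exp_eq_exp_mul_sum hb
      (a := fun n => if n = 0 then d else if n = 1 then e else 0) (K := 2)
      (fun n => by rcases n with _ | _ | n <;> simp [hd, he.eq]) (by simp)
  rw [sub_mul, hexp_d, hexp_e, mul_add, add_sub_cancel_right]

/-- The lists of pairs `(g, m)` with `1 ≤ m ≤ N` whose first components form a sublist of `P`. They
index the terms of an ordered product of exponentials. -/
def multiplicityLists {ι : Type*} [DecidableEq ι] (N : ℕ) : List ι → Finset (List (ι × ℕ))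
  | [] => {[]}
  | g :: P => multiplicityLists N P ∪
      (Icc 1 N ×ˢ multiplicityLists N P).image fun q => (g, q.1) :: q.2

variable {ι : Type*} [DecidableEq ι]

theorem mem_multiplicityLists {N : ℕ} {P : List ι} {L : List (ι × ℕ)} :
    L ∈ multiplicityLists N P ↔
      (L.map Prod.fst).Sublist P ∧ ∀ p ∈ L, 1 ≤ p.2 ∧ p.2 ≤ N := by
  induction P generalizing L with
  | nil =>
    simp only [multiplicityLists, mem_singleton, List.sublist_nil, List.map_eq_nil_iff]
    exact ⟨by rintro rfl; simp, And.left⟩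
  | cons g P ih =>
    simp only [multiplicityLists, mem_union, mem_image, mem_product, mem_Icc, ih,
      List.sublist_cons_iff, Prod.exists]
    constructor
    · rintro (⟨hL, hmul⟩ | ⟨m, L, ⟨hm, hL, hmul⟩, rfl⟩)
      · exact ⟨.inl hL, hmul⟩
      · exact ⟨.inr ⟨_, rfl, hL⟩, List.forall_mem_cons.2 ⟨hm, hmul⟩⟩
    · rintro ⟨hL | ⟨r, hr, hL⟩, hmul⟩
      · exact .inl ⟨hL, hmul⟩
      · obtain ⟨⟨g, m⟩, L, rfl, rfl, rfl⟩ := List.map_eq_cons_iff.1 hr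
        rw [List.forall_mem_cons] at hmul
        exact .inr ⟨m, L, ⟨hmul.1, hL, hmul.2⟩, rfl⟩

theorem prod_exp_eq_sum_multiplicityLists {N : ℕ} (b : ι → R) :
    ∀ {P : List ι}, P.Nodup → (∀ g ∈ P, b g ^ (N + 1) = 0) →
      (P.map fun g => exp (b g)).prod =
        ∑ L ∈ multiplicityLists N P, (L.map fun p => (p.2 ! : ℚ)⁻¹ • b p.1 ^ p.2).prod
  | [], _, _ => by simp [multiplicityLists]
  | g :: P, hP, hb => by
    rw [List.nodup_cons] at hP
    rw [List.forall_mem_cons] at hb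
    have hdisj : Disjoint (multiplicityLists N P)
        ((Icc 1 N ×ˢ multiplicityLists N P).image fun q => (g, q.1) :: q.2) := by
      refine disjoint_left.2 fun L hL hL' => hP.1 ?_
      obtain ⟨q, -, rfl⟩ := mem_image.1 hL'
      exact (mem_multiplicityLists.1 hL).1.subset (by simp)
    have hexp : exp (b g) = 1 + ∑ n ∈ Icc 1 N, (n ! : ℚ)⁻¹ • b g ^ n := by
      rw [exp_eq_sum hb.1, range_eq_Ico, sum_eq_sum_Ico_succ_bot N.succ_pos,
        ← Ico_add_one_right_eq_Icc]
      simp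
    rw [List.map_cons, List.prod_cons, prod_exp_eq_sum_multiplicityLists b hP.2 hb.2, hexp, add_mul,
      one_mul, sum_mul_sum, ← sum_product', multiplicityLists, sum_union hdisj, sum_image]
    · simp only [List.map_cons, List.prod_cons]
    · rintro ⟨m, L⟩ - ⟨m', L'⟩ - h
      simpa using h

end Exponential

section Lazard

variable {X : Type*} [LinearOrder X]

/-- A strictly decreasing list of the Lyndon words of length at most `N` in an initial segment of
the lexicographic order. -/
structure IsLyndonInitial (N : ℕ) (P : List (List X)) : Prop where
  isLyndon : ∀ w ∈ P, IsLyndon w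
  length_le : ∀ w ∈ P, w.length ≤ N
  pairwise : P.Pairwise fun v w => w < v
  mem_of_le : ∀ w ∈ P, ∀ v, IsLyndon v → v.length ≤ N → v ≤ w → v ∈ P

namespace IsLyndonInitial

variable {N : ℕ} {g : List X} {P : List (List X)}

theorem nodup (h : IsLyndonInitial N P) : P.Nodup := h.pairwise.imp ne_of_gt

theorem mem_cons_iff (h : IsLyndonInitial N (g :: P)) {w : List X} :
    w ∈ g :: P ↔ w ∈ lyndonIic g ∧ w.length ≤ N := by
  refine ⟨fun hw => ⟨⟨h.isLyndon w hw, ?_⟩, h.length_le w hw⟩, fun hw =>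
    h.mem_of_le g List.mem_cons_self w hw.1.1 hw.2 hw.1.2⟩
  rcases List.mem_cons.1 hw with rfl | hw
  · exact le_rfl
  · exact (List.rel_of_pairwise_cons h.pairwise hw).le

theorem mem_tail_iff (h : IsLyndonInitial N (g :: P)) {w : List X} :
    w ∈ P ↔ w ∈ lyndonIio g ∧ w.length ≤ N := by
  have hg : g ∉ P := (List.nodup_cons.1 h.nodup).1
  have hw : w ∈ P ↔ w ∈ g :: P ∧ w ≠ g := by
    rw [List.mem_cons]
    exact ⟨fun hw => ⟨.inr hw, ne_of_mem_of_not_mem hw hg⟩, fun hw => hw.1.resolve_left hw.2⟩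
  rw [hw, h.mem_cons_iff, lyndonIic, lyndonIio, Set.mem_ofPred_eq, Set.mem_ofPred_eq,
    lt_iff_le_and_ne]
  tauto

theorem tail (h : IsLyndonInitial N (g :: P)) : IsLyndonInitial N P where
  isLyndon w hw := h.isLyndon w (List.mem_cons_of_mem g hw)
  length_le w hw := h.length_le w (List.mem_cons_of_mem g hw)
  pairwise := h.pairwise.of_cons
  mem_of_le w hw v hv hvN hvw := by
    rw [h.mem_tail_iff] at hw ⊢
    exact ⟨⟨hv, hvw.trans_lt hw.1.2⟩, hvN⟩

end IsLyndonInitial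

theorem exists_isLyndonInitial_mem_iff [Finite X] (N : ℕ) :
    ∃ P : List (List X), IsLyndonInitial N P ∧ ∀ w, w ∈ P ↔ IsLyndon w ∧ w.length ≤ N := by
  have hfin : {w : List X | IsLyndon w ∧ w.length ≤ N}.Finite :=
    (List.finite_length_le X N).subset fun w hw => hw.2
  have hmem (w : List X) : w ∈ hfin.toFinset.sort (· ≥ ·) ↔ IsLyndon w ∧ w.length ≤ N := by
    rw [mem_sort, Set.Finite.mem_toFinset, Set.mem_ofPred_eq]
  refine ⟨hfin.toFinset.sort (· ≥ ·), ?_, hmem⟩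
  exact {
    isLyndon := fun w hw => ((hmem w).1 hw).1
    length_le := fun w hw => ((hmem w).1 hw).2
    pairwise := (sortedGT_sort _).pairwise
    mem_of_le := fun w _ v hv hvN _ => (hmem v).2 ⟨hv, hvN⟩ }

open scoped Classical in
/-- The letters of Lazard elimination that are left when the words of `P` are not eliminated: the
suffix-minimal elements of `P`. -/
noncomputable def letters (P : List (List X)) : Finset (List X) :=
  {a ∈ P.toFinset | a ∈ suffixMinimal {w | w ∈ P}}

theorem mem_letters_iff_of_agree {N : ℕ} {P : List (List X)} {I : Set (List X)}
    (h : ∀ w, w ∈ P ↔ w ∈ I ∧ w.length ≤ N) {a : List X} :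
    a ∈ letters P ↔ a ∈ suffixMinimal I ∧ a.length ≤ N := by
  simp only [letters, mem_filter, List.mem_toFinset,
    ← mem_suffixMinimal_iff_of_agree (J := {w | w ∈ P}) h]
  exact and_iff_right_of_imp And.left

theorem sum_letters_tail {B : Type*} [AddCommMonoid B] {N : ℕ} {g : List X} {P : List (List X)}
    (h : IsLyndonInitial N (g :: P)) {f : List X → B} (hf : ∀ w, N < w.length → f w = 0) :
    ∑ b ∈ letters P, f b =
      ∑ a ∈ (letters (g :: P)).erase g, ∑ n ∈ range (N + 1), f (a ++ wordPow g n) := by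
  have hg : IsLyndon g := h.isLyndon g List.mem_cons_self
  have mem_cons {a} : a ∈ letters (g :: P) ↔ a ∈ suffixMinimal (lyndonIic g) ∧ a.length ≤ N :=
    mem_letters_iff_of_agree fun _ => h.mem_cons_iff
  have mem_tail {b} : b ∈ letters P ↔ b ∈ suffixMinimal (lyndonIio g) ∧ b.length ≤ N :=
    mem_letters_iff_of_agree fun _ => h.mem_tail_iff
  have hshort (q : List X × ℕ) (hq : f (q.1 ++ wordPow g q.2) ≠ 0) :
      (q.1 ++ wordPow g q.2).length ≤ N := not_lt.1 (mt (hf _) hq)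
  rw [← sum_product', ← sum_filter_of_ne fun q _ => hshort q]
  symm
  refine sum_nbij (fun q => q.1 ++ wordPow g q.2) ?_ ?_ ?_ fun _ _ => rfl
  · rintro ⟨a, n⟩ hq
    simp only [mem_filter, mem_product, mem_erase, mem_cons] at hq
    exact mem_tail.2 ⟨append_wordPow_mem_suffixMinimal hg hq.1.1.2.1 hq.1.1.1 n, hq.2⟩
  · rintro ⟨a, m⟩ ha ⟨b, n⟩ hb hab
    simp only [coe_filter, Set.mem_ofPred_eq, mem_product, mem_erase, mem_cons] at ha hb
    simpa using (append_wordPow_inj_of_mem hg ha.1.1.2.1 ha.1.1.1 hb.1.1.2.1 hb.1.1.1).1 hab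
  · intro b hb
    obtain ⟨hb, hbN⟩ := mem_tail.1 hb
    obtain ⟨a, ha, hag, n, rfl⟩ := exists_eq_append_wordPow_of_mem hg hb
    have hn : n ≤ n * g.length := Nat.le_mul_of_pos_right n (List.length_pos_iff.2 hg.1)
    have hlen := hbN
    rw [List.length_append, length_wordPow] at hlen
    refine ⟨(a, n), ?_, rfl⟩
    simp only [coe_filter, Set.mem_ofPred_eq, mem_product, mem_erase, mem_cons, mem_range]
    exact ⟨⟨⟨hag, ha, by omega⟩, by omega⟩, hbN⟩

theorem sum_letters_eq_sum_singleton {B : Type*} [AddCommMonoid B] [Fintype X] {N : ℕ}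
    {P : List (List X)} (hP : ∀ w, w ∈ P ↔ IsLyndon w ∧ w.length ≤ N) {f : List X → B}
    (hf : ∀ w, N < w.length → f w = 0) : ∑ a ∈ letters P, f a = ∑ x, f [x] := by
  have mem_letters {a} : a ∈ letters P ↔ (∃ x, [x] = a) ∧ a.length ≤ N := by
    rw [mem_letters_iff_of_agree (I := {w | IsLyndon w}) hP, suffixMinimal_setOf_isLyndon,
      Set.mem_range]
  calc
    ∑ a ∈ letters P, f a = ∑ a ∈ univ.image fun x : X => [x], f a := by
      refine sum_subset (fun a ha => ?_) fun a ha ha' => hf a ?_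
      · simpa using (mem_letters.1 ha).1
      · by_contra! hlen
        exact ha' (mem_letters.2 ⟨by simpa using ha, hlen⟩)
    _ = ∑ x, f [x] := sum_image fun x _ y _ hxy => by simpa using hxy

/-- `E` satisfies the bracketing recursion of the Lyndon–Shirshov basis: `E(α) = [E(α_L), E(α_R)]`
for the standard factorization of a Lyndon word `α` of length at least two. -/
def IsLyndonShirshov {R : Type*} [Ring R] (E : List X → R) : Prop :=
  ∀ αL αR : List X, IsLyndon (αL ++ αR) → αL ≠ [] → IsLyndon αR →
    (∀ δ β' : List X, αL ++ αR = β' ++ δ → β' ≠ [] → IsLyndon δ → δ.length ≤ αR.length) →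
    E (αL ++ αR) = E αL * E αR - E αR * E αL

theorem IsLyndonShirshov.append_wordPow_succ {R : Type*} [Ring R] {E : List X → R}
    (hE : IsLyndonShirshov E) {g a : List X} (hg : IsLyndon g)
    (ha : a ∈ suffixMinimal (lyndonIic g)) (hag : a ≠ g) (n : ℕ) :
    E (a ++ wordPow g (n + 1)) =
      E (a ++ wordPow g n) * E g - E g * E (a ++ wordPow g n) := by
  have hmem := append_wordPow_mem_suffixMinimal hg ha hag (n + 1)
  rw [wordPow_succ, ← List.append_assoc] at hmem ⊢
  refine hE _ g hmem.1.1 (by simp [ha.1.1.1]) hg fun s u hu hu0 hs => ?_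
  exact length_le_of_append_mem_suffixMinimal hg hmem hs ⟨u, hu.symm⟩
    fun h => hu0 (by simpa [h] using hu)

end Lazard

section Recursion

variable {X k R : Type*} [Ring R]

/-- `E` represents words in the ring `R` truncated above length `N`, and `d` is a degree operator
for this representation: `[d, E(α)] = |α| E(α)`. -/
structure IsTruncatedGrading (k : Type*) [CommRing k] [Algebra k R] (N : ℕ) (d : R)
    (E : List X → R) : Prop where
  commutator : ∀ w, d * E w - E w * d = (w.length : k) • E w
  eq_zero_of_lt_length : ∀ w, N < w.length → E w = 0
  pow_eq_zero : ∀ w, w ≠ [] → E w ^ (N + 1) = 0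

theorem IsTruncatedGrading.isNilpotent_smul [CommRing k] [Algebra k R] {N : ℕ} {d : R}
    {E : List X → R} (hE : IsTruncatedGrading k N d E) {w : List X} (hw : w ≠ []) (c : k) :
    IsNilpotent (c • E w) :=
  ⟨N + 1, by rw [smul_pow, hE.pow_eq_zero w hw, smul_zero]⟩

variable [LinearOrder X] [Field k] [CharZero k] [Algebra k R] [Algebra ℚ R] {N : ℕ}
  {d : R} {E : List X → R} {C : List X → k}

theorem smul_mul_exp_eq_exp_mul_sum (hE : IsTruncatedGrading k N d E) (hLS : IsLyndonShirshov E)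
    (hC : IsLyndonCoeff C) {g a : List X} (hg : IsLyndon g)
    (ha : a ∈ suffixMinimal (lyndonIic g)) (hag : a ≠ g) :
    ((a.length * normCoeff C a) • E a) * exp (normCoeff C g • E g) =
      exp (normCoeff C g • E g) * ∑ n ∈ range (N + 1),
        ((a ++ wordPow g n).length * normCoeff C (a ++ wordPow g n)) • E (a ++ wordPow g n) := by
  have hlen : N < (a ++ wordPow g (N + 1)).length := by
    have := Nat.le_mul_of_pos_right (N + 1) (List.length_pos_iff.2 hg.1)
    simp only [List.length_append, length_wordPow]
    omega
  have key := mul_exp_eq_exp_mul_sum (hE.isNilpotent_smul hg.1 _) (K := N + 1)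
    (a := fun n => (a.length * normCoeff C a * normCoeff C g ^ n) • E (a ++ wordPow g n))
    (fun n => by
      rw [hLS.append_wordPow_succ hg ha hag n, smul_mul_smul_comm, smul_mul_smul_comm, smul_sub,
        pow_succ, ← mul_assoc, mul_comm (normCoeff C g)])
    (by rw [hE.eq_zero_of_lt_length _ hlen, smul_zero])
  simp only [wordPow_zero, List.append_nil, pow_zero, mul_one] at key
  rw [key]
  refine congrArg _ (sum_congr rfl fun n _ => ?_)
  rw [hC.length_mul_normCoeff_append_wordPow hg ha hag n, inv_natCast_smul_eq ℚ k, smul_smul]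
  ring_nf

theorem sub_sum_letters_mul_prod_exp (hE : IsTruncatedGrading k N d E) (hLS : IsLyndonShirshov E)
    (hC : IsLyndonCoeff C) : ∀ {P : List (List X)}, IsLyndonInitial N P →
      (d - ∑ a ∈ letters P, (a.length * normCoeff C a) • E a) *
          (P.map fun g => exp (normCoeff C g • E g)).prod =
        (P.map fun g => exp (normCoeff C g • E g)).prod * d
  | [], _ => by simp [letters]
  | g :: P, hP => by
    have hg : IsLyndon g := hP.isLyndon g List.mem_cons_self
    have hdiag : (d - (g.length * normCoeff C g) • E g) * exp (normCoeff C g • E g) =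
        exp (normCoeff C g • E g) * d := by
      refine sub_mul_exp_eq_exp_mul (hE.isNilpotent_smul hg.1 _) ?_ ?_
      · rw [mul_smul_comm, smul_mul_assoc, ← smul_sub, hE.commutator, smul_smul, mul_comm]
      · exact ((Commute.refl (E g)).smul_left _).smul_right _
    have mem_letters {a} :
        a ∈ letters (g :: P) ↔ a ∈ suffixMinimal (lyndonIic g) ∧ a.length ≤ N :=
      mem_letters_iff_of_agree fun _ => hP.mem_cons_iff
    have hg_mem : g ∈ letters (g :: P) :=
      mem_letters.2 ⟨self_mem_suffixMinimal_lyndonIic hg, hP.length_le g List.mem_cons_self⟩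
    have hstep : (∑ a ∈ (letters (g :: P)).erase g, (a.length * normCoeff C a) • E a) *
        exp (normCoeff C g • E g) =
          exp (normCoeff C g • E g) * ∑ b ∈ letters P, (b.length * normCoeff C b) • E b := by
      rw [sum_letters_tail hP fun w hw => by rw [hE.eq_zero_of_lt_length w hw, smul_zero], sum_mul,
        mul_sum]
      refine sum_congr rfl fun a ha => ?_
      rw [mem_erase, mem_letters] at ha
      exact smul_mul_exp_eq_exp_mul_sum hE hLS hC hg ha.2.1 ha.1
    rw [List.map_cons, List.prod_cons, ← mul_assoc, ← add_sum_erase _ _ hg_mem, ← sub_sub, sub_mul,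
      hdiag, hstep, ← mul_sub, mul_assoc,
      sub_sum_letters_mul_prod_exp hE hLS hC hP.tail, mul_assoc]

end Recursion

section Expansion

variable {X k R : Type*} [Field k] [Ring R] [Algebra k R]

/-- The term `∏ⱼ (C(αⱼ) E(αⱼ) / |αⱼ|!) ^ tⱼ / tⱼ!` of the expansion, for a list of pairs
`(αⱼ, tⱼ)`. -/
def expansionTerm (C : List X → k) (E : List X → R) (L : List (List X × ℕ)) : R :=
  (L.map fun p => (p.2 ! : k)⁻¹ • (normCoeff C p.1 • E p.1) ^ p.2).prod

theorem expansionTerm_eq_inv_smul (C : List X → k) (E : List X → R) (L : List (List X × ℕ)) :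
    expansionTerm C E L =
      (L.map fun p => (p.2 ! : k)).prod⁻¹ •
        (L.map fun p => (normCoeff C p.1 • E p.1) ^ p.2).prod := by
  rw [expansionTerm]
  induction L with
  | nil => simp
  | cons p L ih =>
    simp only [List.map_cons, List.prod_cons, ih, mul_inv, smul_mul_smul_comm]

variable [LinearOrder X]

theorem IsLyndonInitial.mem_multiplicityLists_iff {N : ℕ} {P : List (List X)}
    (hP : IsLyndonInitial N P) (hmem : ∀ w, w ∈ P ↔ IsLyndon w ∧ w.length ≤ N)
    {L : List (List X × ℕ)} :
    L ∈ multiplicityLists N P ↔ IsFactorList L ∧ ∀ p ∈ L, p.1.length ≤ N ∧ p.2 ≤ N := by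
  rw [mem_multiplicityLists]
  constructor
  · rintro ⟨hL, hmul⟩
    have hfst (p) (hp : p ∈ L) : IsLyndon p.1 ∧ p.1.length ≤ N :=
      (hmem _).1 (hL.subset (List.mem_map_of_mem hp))
    exact ⟨⟨fun p hp => (hfst p hp).1, fun p hp => (hmul p hp).1,
      List.pairwise_map.1 (hP.pairwise.sublist hL)⟩, fun p hp => ⟨(hfst p hp).2, (hmul p hp).2⟩⟩
  · rintro ⟨hL, hN⟩
    have hpair : (L.map Prod.fst).Pairwise fun v w => w < v := List.pairwise_map.2 hL.pairwise
    have hsub : L.map Prod.fst ⊆ P := by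
      intro w hw
      obtain ⟨p, hp, rfl⟩ := List.mem_map.1 hw
      exact (hmem _).2 ⟨hL.isLyndon p hp, (hN p hp).1⟩
    exact ⟨List.sublist_of_subperm_of_sortedGE
      (List.subperm_of_subset (hpair.imp ne_of_gt) hsub) (hpair.imp le_of_lt).sortedGE
      (hP.pairwise.imp le_of_lt).sortedGE, fun p hp => ⟨hL.one_le p hp, (hN p hp).2⟩⟩

theorem exists_sub_sum_mul_sum_expansionTerm [Fintype X] [CharZero k] {N : ℕ} {d : R}
    {E : List X → R} {C : List X → k} (hE : IsTruncatedGrading k N d E)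
    (hLS : IsLyndonShirshov E) (hC : IsLyndonCoeff C) :
    ∃ I : Finset (List (List X × ℕ)),
      (∀ L, L ∈ I ↔ IsFactorList L ∧ ∀ p ∈ L, p.1.length ≤ N ∧ p.2 ≤ N) ∧
      (d - ∑ x, E [x]) * ∑ L ∈ I, expansionTerm C E L = (∑ L ∈ I, expansionTerm C E L) * d := by
  let _ : Algebra ℚ R := Algebra.compHom R (algebraMap ℚ k)
  obtain ⟨P, hP, hmem⟩ := exists_isLyndonInitial_mem_iff (X := X) N
  refine ⟨multiplicityLists N P, fun L => hP.mem_multiplicityLists_iff hmem, ?_⟩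
  have hexp : ∑ L ∈ multiplicityLists N P, expansionTerm C E L =
      (P.map fun g => exp (normCoeff C g • E g)).prod := by
    rw [prod_exp_eq_sum_multiplicityLists _ hP.nodup fun g hg => by
      rw [smul_pow, hE.pow_eq_zero g (hP.isLyndon g hg).1, smul_zero]]
    simp only [expansionTerm, inv_natCast_smul_eq ℚ k]
  have hletters : ∑ x, E [x] = ∑ a ∈ letters P, (a.length * normCoeff C a) • E a := by
    rw [sum_letters_eq_sum_singleton hmem fun w hw => by
      rw [hE.eq_zero_of_lt_length w hw, smul_zero]]
    simp [normCoeff, hC.singleton]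
  rw [hexp, hletters, sub_sum_letters_mul_prod_exp hE hLS hC hP]

end Expansion

section Shift

variable {σ : Type*}

/-- The exponent `p - c`, truncated at zero in each coordinate, as an exponent below `i`. -/
def subExponent {i : σ → ℕ} (p : Set.Iic i) (c : σ → ℕ) : Set.Iic i :=
  ⟨p - c, Set.mem_Iic.2 (tsub_le_self.trans p.2)⟩

open scoped Classical in
/-- Multiplication by the monomial `a t ^ c` on polynomials with coefficients in `A` in commuting
variables `t`, truncated to the exponents `p ≤ i`. A polynomial is encoded by its coefficients. -/
noncomputable def shift (k : Type*) {A : Type*} [CommRing k] [Ring A] [Algebra k A] (i c : σ → ℕ) :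
    A →ₗ[k] Module.End k (Set.Iic i → A) :=
  LinearMap.mk₂ k (fun a f p => if c ≤ p then a * f (subExponent p c) else 0)
    (fun a b f => by ext p; simp only [Pi.add_apply]; split_ifs <;> simp [add_mul])
    (fun r a f => by ext p; simp only [Pi.smul_apply]; split_ifs <;> simp)
    (fun a f g => by ext p; simp only [Pi.add_apply]; split_ifs <;> simp [mul_add])
    (fun r a f => by ext p; simp only [Pi.smul_apply]; split_ifs <;> simp)

variable {k A : Type*} [CommRing k] [Ring A] [Algebra k A] {i c c' : σ → ℕ} {a a' : A}

theorem shift_apply_of_le (f : Set.Iic i → A) {p : Set.Iic i} (hc : c ≤ p) :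
    shift k i c a f p = a * f (subExponent p c) := if_pos hc

theorem shift_apply_of_not_le (f : Set.Iic i → A) {p : Set.Iic i} (hc : ¬c ≤ p) :
    shift k i c a f p = 0 := if_neg hc

theorem shift_eq_zero (hc : ¬c ≤ i) : shift k i c a = 0 := by
  ext f p
  exact shift_apply_of_not_le f fun h => hc (h.trans p.2)

theorem shift_zero_one : shift k i 0 (1 : A) = 1 := by
  ext f p
  rw [shift_apply_of_le f zero_le, one_mul, Module.End.one_apply, subExponent]
  simp only [tsub_zero]

theorem shift_mul_shift : shift k i c a * shift k i c' a' = shift k i (c + c') (a * a') := by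
  ext f p
  rw [Module.End.mul_apply]
  by_cases hc : c ≤ (p : σ → ℕ)
  · have hle : c' ≤ (subExponent p c : σ → ℕ) ↔ c + c' ≤ p := le_tsub_iff_left hc
    rw [shift_apply_of_le _ hc]
    by_cases hc' : c + c' ≤ p
    · rw [shift_apply_of_le _ (hle.2 hc'), shift_apply_of_le _ hc', mul_assoc]
      simp only [subExponent, tsub_tsub]
    · rw [shift_apply_of_not_le _ (mt hle.1 hc'), mul_zero, shift_apply_of_not_le _ hc']
  · rw [shift_apply_of_not_le _ hc, shift_apply_of_not_le _ fun h => hc (le_self_add.trans h)]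

theorem shift_pow (n : ℕ) : shift k i c a ^ n = shift k i (n • c) (a ^ n) := by
  induction n with
  | zero => rw [pow_zero, pow_zero, zero_smul, shift_zero_one]
  | succ n ih => rw [pow_succ, ih, shift_mul_shift, succ_nsmul, pow_succ]

theorem prod_map_shift {ι : Type*} (c : ι → σ → ℕ) (a : ι → A) (L : List ι) :
    (L.map fun j => shift k i (c j) (a j)).prod = shift k i (L.map c).sum (L.map a).prod := by
  induction L with
  | nil => exact shift_zero_one.symm
  | cons j L ih => simp only [List.map_cons, List.prod_cons, List.sum_cons, ih, shift_mul_shift]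

open scoped Classical in
/-- The constant polynomial `1`. -/
noncomputable def vacuum (A : Type*) [Ring A] (i : σ → ℕ) : Set.Iic i → A := fun p =>
  if (p : σ → ℕ) = 0 then 1 else 0

theorem shift_vacuum_apply (p : Set.Iic i) [Decidable (c = p)] :
    shift k i c a (vacuum A i) p = if c = p then a else 0 := by
  by_cases hc : c ≤ (p : σ → ℕ)
  · have : (subExponent p c : σ → ℕ) = 0 ↔ c = p :=
      tsub_eq_zero_iff_le.trans (hc.ge_iff_eq)
    simp only [shift_apply_of_le _ hc, vacuum, this, mul_ite, mul_one, mul_zero]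
  · rw [shift_apply_of_not_le _ hc, if_neg fun h => hc h.le]

variable [Fintype σ]

/-- The Euler operator, multiplying the coefficient of `t ^ p` by the total degree `∑ x, p x`. -/
def degreeOperator (k A : Type*) [CommRing k] [Ring A] [Algebra k A] (i : σ → ℕ) :
    Module.End k (Set.Iic i → A) where
  toFun f p := (∑ x, p.1 x : k) • f p
  map_add' f g := by ext p; simp
  map_smul' r f := by ext p; simp [smul_comm r]

theorem degreeOperator_apply (f : Set.Iic i → A) (p : Set.Iic i) :
    degreeOperator k A i f p = (∑ x, p.1 x : k) • f p := rfl

theorem degreeOperator_vacuum : degreeOperator k A i (vacuum A i) = 0 := by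
  ext p
  by_cases hp : (p : σ → ℕ) = 0
  · simp [degreeOperator_apply, hp]
  · simp [degreeOperator_apply, vacuum, hp]

theorem degreeOperator_mul_shift_sub :
    degreeOperator k A i * shift k i c a - shift k i c a * degreeOperator k A i =
      ((∑ x, c x : ℕ) : k) • shift k i c a := by
  ext f p
  simp only [LinearMap.sub_apply, Module.End.mul_apply, LinearMap.smul_apply, Pi.sub_apply,
    Pi.smul_apply, degreeOperator_apply]
  by_cases hc : c ≤ (p : σ → ℕ)
  · have hsum : (∑ x, p.1 x : k) = ((∑ x, c x : ℕ) : k) + ∑ x, ((subExponent p c).1 x : k) := by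
      rw [Nat.cast_sum, ← sum_add_distrib]
      refine sum_congr rfl fun x _ => ?_
      rw [← Nat.cast_add]
      exact congrArg Nat.cast (add_tsub_cancel_of_le (hc x)).symm
    rw [shift_apply_of_le _ hc, shift_apply_of_le _ hc, degreeOperator_apply, hsum, add_smul,
      mul_smul_comm, add_sub_cancel_right]
  · simp only [shift_apply_of_not_le _ hc, smul_zero, sub_zero]

end Shift

section Content

variable {X k A : Type*} [LinearOrder X]

/-- The vector `x ↦ α(x)` of the numbers of occurrences of the letters in a word. -/
def content (w : List X) : X → ℕ := fun x => w.count x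

theorem sum_content [Fintype X] (w : List X) : ∑ x, content w x = w.length := by
  have := Multiset.sum_count_eq_card (s := univ) (m := (w : Multiset X)) (by simp)
  simpa only [content, Multiset.coe_count, Multiset.coe_card] using this

@[simp] theorem content_nil : content ([] : List X) = 0 := rfl

theorem content_append (v w : List X) : content (v ++ w) = content v + content w :=
  funext fun _ => List.count_append

theorem content_ne_zero {w : List X} (hw : w ≠ []) : content w ≠ 0 := by
  obtain ⟨x, w, rfl⟩ := List.exists_cons_of_ne_nil hw
  exact fun h => by simpa [content] using congrFun h x

theorem content_word (L : List (List X × ℕ)) :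
    content (word L) = (L.map fun p => p.2 • content p.1).sum := by
  have content_wordPow (g : List X) (n : ℕ) : content (wordPow g n) = n • content g := by
    induction n with
    | zero => simp
    | succ n ih => rw [wordPow_succ, content_append, ih, succ_nsmul]
  induction L with
  | nil => simp
  | cons p L ih =>
    rw [word_cons, content_append, ih, content_wordPow, List.map_cons, List.sum_cons]

theorem content_word_apply (L : List (List X × ℕ)) (x : X) :
    content (word L) x = (L.map fun p => p.2 * p.1.count x).sum := by
  have := map_list_sum (Pi.evalAddMonoidHom (fun _ : X => ℕ) x) (L.map fun p => p.2 • content p.1)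
  rwa [List.map_map, ← content_word] at this

theorem content_singleton (x : X) : content [x] = Pi.single x 1 := by
  ext y
  rcases eq_or_ne y x with rfl | h
  · simp [content]
  · simp [content, h, h.symm]

theorem content_singleton_le_iff {x : X} {p : X → ℕ} : content [x] ≤ p ↔ 1 ≤ p x := by
  refine ⟨fun h => by simpa [content_singleton] using h x, fun h y => ?_⟩
  rcases eq_or_ne y x with rfl | hy
  · simpa [content_singleton] using h
  · simp [content_singleton, hy]

theorem sub_content_singleton (p : X → ℕ) (x : X) :
    p - content [x] = Function.update p x (p x - 1) := by
  ext y
  rcases eq_or_ne y x with rfl | h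
  · simp [content_singleton]
  · simp [content_singleton, h]

variable [CommRing k] [Ring A] [Algebra k A] {i : X → ℕ} {E : List X → A}

theorem IsLyndonShirshov.shift_content (hE : IsLyndonShirshov E) :
    IsLyndonShirshov fun w => shift k i (content w) (E w) := by
  intro u v huv hu hv hmax
  simp only [hE u v huv hu hv hmax, map_sub, content_append, shift_mul_shift,
    add_comm (content v)]

theorem isTruncatedGrading_shift_content [Fintype X] (E : List X → A) :
    IsTruncatedGrading k (∑ x, i x) (degreeOperator k A i)
      fun w => shift k i (content w) (E w) where
  commutator w := by rw [degreeOperator_mul_shift_sub, sum_content]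
  eq_zero_of_lt_length w hw := by
    refine shift_eq_zero fun h => hw.not_ge ?_
    rw [← sum_content]
    exact sum_le_sum fun x _ => h x
  pow_eq_zero w hw := by
    obtain ⟨x, hx⟩ := Function.ne_iff.1 (content_ne_zero hw)
    rw [shift_pow]
    refine shift_eq_zero fun h => ?_
    have hle : (∑ y, i y + 1) * content w x ≤ i x := h x
    have hpos : ∑ y, i y + 1 ≤ (∑ y, i y + 1) * content w x :=
      Nat.le_mul_of_pos_right _ (Nat.pos_of_ne_zero hx)
    have hsum : i x ≤ ∑ y, i y := single_le_sum_of_canonicallyOrdered (mem_univ x)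
    omega

end Content

section Grading

variable {X k A : Type*} [LinearOrder X] [Field k] [Ring A] [Algebra k A] {i : X → ℕ}

theorem expansionTerm_shift_content (C : List X → k) (E : List X → A) (L : List (List X × ℕ)) :
    expansionTerm C (fun w => shift k i (content w) (E w)) L =
      shift k i (content (word L)) (expansionTerm C E L) := by
  simp only [expansionTerm, ← map_smul, shift_pow, prod_map_shift, content_word]

/-- The coefficient of `t ^ p` in the ordered product of the exponentials
`exp ((C(α) E(α) / |α|!) t ^ content α)` over all Lyndon words `α`, the largest word coming
first. -/
noncomputable def expansionCoeff (C : List X → k) (E : List X → A) (p : X → ℕ) : A :=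
  ∑ᶠ L ∈ {L : List (List X × ℕ) | IsFactorList L ∧ content (word L) = p}, expansionTerm C E L

theorem expansionCoeff_zero (C : List X → k) (E : List X → A) : expansionCoeff C E 0 = 1 := by
  have hset : {L : List (List X × ℕ) | IsFactorList L ∧ content (word L) = 0} = {[]} := by
    ext L
    rw [Set.mem_ofPred_eq, Set.mem_singleton_iff]
    constructor
    · rintro ⟨hL, h⟩
      exact hL.eq_nil_of_word_eq_nil (by_contra fun hw => content_ne_zero hw h)
    · rintro rfl
      exact ⟨isFactorList_nil, content_nil⟩
  rw [expansionCoeff, hset, finsum_mem_singleton, expansionTerm, List.map_nil, List.prod_nil]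

variable [Fintype X]

theorem sum_expansionTerm_shift_vacuum (C : List X → k) (E : List X → A)
    {I : Finset (List (List X × ℕ))}
    (hI : ∀ L, L ∈ I ↔
      IsFactorList L ∧ ∀ p ∈ L, p.1.length ≤ ∑ x, i x ∧ p.2 ≤ ∑ x, i x)
    (p : Set.Iic i) :
    (∑ L ∈ I, expansionTerm C (fun w => shift k i (content w) (E w)) L) (vacuum A i) p =
      expansionCoeff C E p := by
  classical
  have hset : {L : List (List X × ℕ) | IsFactorList L ∧ content (word L) = p} =
      ↑{L ∈ I | content (word L) = p} := by
    ext L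
    rw [mem_coe, mem_filter, hI, Set.mem_ofPred_eq]
    refine and_congr_left fun h => (and_iff_left_of_imp fun hL q hq => ?_).symm
    have hlen : (word L).length ≤ ∑ x, i x := by
      rw [← sum_content, h]
      exact sum_le_sum fun x _ => p.2 x
    exact (hL.length_le_and_le hq).imp hlen.trans' hlen.trans'
  rw [expansionCoeff, hset, finsum_mem_coe_finset, sum_filter, LinearMap.sum_apply,
    Finset.sum_apply]
  refine sum_congr rfl fun L _ => ?_
  rw [expansionTerm_shift_content, shift_vacuum_apply]

theorem sum_smul_expansionCoeff [CharZero k] {C : List X → k} (hC : IsLyndonCoeff C)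
    {E : List X → A} (hE : IsLyndonShirshov E) (p : X → ℕ) :
    (∑ x, p x : k) • expansionCoeff C E p =
      ∑ x with 1 ≤ p x, E [x] * expansionCoeff C E (Function.update p x (p x - 1)) := by
  obtain ⟨I, hI, hcomm⟩ := exists_sub_sum_mul_sum_expansionTerm
    (isTruncatedGrading_shift_content (k := k) (i := p) E) hE.shift_content hC
  set F := ∑ L ∈ I, expansionTerm C (fun w => shift k p (content w) (E w)) L
  have hcoeff (q : Set.Iic p) : F (vacuum A p) q = expansionCoeff C E q :=
    sum_expansionTerm_shift_vacuum C E hI q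
  have heuler : degreeOperator k A p (F (vacuum A p)) =
      ∑ x, shift k p (content [x]) (E [x]) (F (vacuum A p)) := by
    rw [← LinearMap.sum_apply, ← sub_eq_zero, ← LinearMap.sub_apply, ← Module.End.mul_apply, hcomm,
      Module.End.mul_apply, degreeOperator_vacuum, map_zero]
  have hp := congrFun heuler ⟨p, Set.mem_Iic.2 le_rfl⟩
  rw [degreeOperator_apply, hcoeff, Finset.sum_apply] at hp
  rw [hp, sum_filter]
  refine sum_congr rfl fun x _ => ?_
  split_ifs with hx
  · rw [shift_apply_of_le _ (content_singleton_le_iff.2 hx), hcoeff, ← sub_content_singleton,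
      subExponent]
  · rw [shift_apply_of_not_le _ (mt content_singleton_le_iff.1 hx)]

theorem eq_factorial_smul_expansionCoeff [CharZero k] {C : List X → k} (hC : IsLyndonCoeff C)
    {E : List X → A} (hE : IsLyndonShirshov E) {SH : (X → ℕ) → A} (hSH_zero : SH 0 = 1)
    (hSH : ∀ p, p ≠ 0 → SH p = ∑ x with 1 ≤ p x, E [x] * SH (Function.update p x (p x - 1)))
    (p : X → ℕ) : SH p = ((∑ x, p x)! : k) • expansionCoeff C E p := by
  induction h : ∑ x, p x generalizing p with
  | zero =>
    obtain rfl : p = 0 := by simpa [funext_iff] using h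
    simp [hSH_zero, expansionCoeff_zero]
  | succ n ih =>
    have hp : p ≠ 0 := by
      rintro rfl
      simp at h
    have hn : ((n + 1 : ℕ) : k) = ∑ x, (p x : k) := by rw [← h, Nat.cast_sum]
    rw [hSH p hp, Nat.factorial_succ, mul_comm, Nat.cast_mul, mul_smul, hn,
      sum_smul_expansionCoeff hC hE p, smul_sum]
    refine sum_congr rfl fun x hx => ?_
    rw [ih (Function.update p x (p x - 1)), mul_smul_comm]
    have hx : 1 ≤ p x := (mem_filter.1 hx).2
    rw [sum_update_of_mem (mem_univ x)]
    have := add_sum_erase univ p (mem_univ x)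
    rw [← sdiff_singleton_eq_erase] at this
    omega

end Grading

theorem _root_.stmt_8_general {X k A : Type*} [LinearOrder X] [Fintype X] [Field k] [CharZero k]
    [Ring A] [Algebra k A] {E : List X → A} (hE : IsLyndonShirshov E) {C : List X → k}
    (hC : IsLyndonCoeff C) {SH : (X → ℕ) → A} (hSH_zero : SH 0 = 1)
    (hSH : ∀ p, p ≠ 0 → SH p = ∑ x with 1 ≤ p x, E [x] * SH (Function.update p x (p x - 1)))
    (i : X → ℕ) :
    SH i = ∑ᶠ L ∈ {L : List (List X × ℕ) |
        IsFactorList L ∧ ∀ x, (L.map fun p => p.2 * p.1.count x).sum = i x},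
      (((∑ x, i x)! : k) / (L.map fun p => (p.2 ! : k)).prod) •
        (L.map fun p => (normCoeff C p.1 • E p.1) ^ p.2).prod := by
  simp only [eq_factorial_smul_expansionCoeff hC hE hSH_zero hSH i, expansionCoeff, smul_finsum,
    expansionTerm_eq_inv_smul, smul_smul, div_eq_mul_inv, funext_iff, content_word_apply]

end LyndonShirshov

/-- Multinomial version (Corollary `cor:noncom-multinomial-thm`): expansion of the
multivariate shuffle type polynomials `SH_{i_M,…,i₁}` in the Lyndon–Shirshov basis.
The alphabet `{1 ≺ ⋯ ≺ M}` is `Fin M`; `E` is the Lyndon–Shirshov basis, `C` the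
coefficient function, and `SHm` the multivariate shuffle type polynomial, all
characterized by the stated hypotheses. -/
theorem stmt_8 (k : Type*) [Field k] [CharZero k] (M : ℕ)
    (E : List (Fin M) → FreeAlgebra k (Fin M))
    (hE1 : ∀ x : Fin M, E [x] = FreeAlgebra.ι k x)
    (hE2 : ∀ αL αR : List (Fin M), IsLyndon (αL ++ αR) → αL ≠ [] → IsLyndon αR →
      (∀ δ β' : List (Fin M), αL ++ αR = β' ++ δ → β' ≠ [] → IsLyndon δ →
        δ.length ≤ αR.length) →
      E (αL ++ αR) = E αL * E αR - E αR * E αL)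
    (C : List (Fin M) → k)
    (hC1 : ∀ x : Fin M, C [x] = 1)
    (hC2 : ∀ (x : Fin M) (w : List (Fin M)) (L : List (List (Fin M) × ℕ)),
      IsLyndon (x :: w) → w ≠ [] →
      (∀ p ∈ L, IsLyndon p.1 ∧ 1 ≤ p.2) →
      L.Chain' (fun p q => List.Lex (· < ·) q.1 p.1) →
      (L.map fun p => (List.replicate p.2 p.1).flatten).flatten = w →
      C (x :: w) =
        (w.length.factorial : k) /
            (L.map fun p => (p.1.length.factorial : k) ^ p.2 * (p.2.factorial : k)).prod *
          (L.map fun p => C p.1 ^ p.2).prod)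
    (SHm : (Fin M → ℕ) → FreeAlgebra k (Fin M))
    (hSH0 : SHm 0 = 1)
    (hSHrec : ∀ i : Fin M → ℕ, i ≠ 0 →
      SHm i = ∑ x ∈ Finset.univ.filter fun x => 1 ≤ i x,
        FreeAlgebra.ι k x * SHm (Function.update i x (i x - 1)))
    (i : Fin M → ℕ) :
    SHm i =
      ∑ᶠ L ∈ {L : List (List (Fin M) × ℕ) |
          (∀ p ∈ L, IsLyndon p.1 ∧ 1 ≤ p.2) ∧
          L.Chain' (fun p q => List.Lex (· < ·) q.1 p.1) ∧
          ∀ x : Fin M, (L.map fun p => p.2 * p.1.count x).sum = i x},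
        (((∑ x, i x).factorial : k) / (L.map fun p => (p.2.factorial : k)).prod) •
          (L.map fun p => ((C p.1 / (p.1.length.factorial : k)) • E p.1) ^ p.2).prod := by
  have h := stmt_8_general hE2 ⟨hC1, fun x L hL hx h =>
      hC2 x _ L hx h (LyndonShirshov.isFactorList_iff_isChain.1 hL).1
        (LyndonShirshov.isFactorList_iff_isChain.1 hL).2 rfl⟩
      hSH0 (by simpa only [hE1] using hSHrec) i
  simp only [LyndonShirshov.isFactorList_iff_isChain, and_assoc] at h
  exact h
end

section
/- Let A be a unital associative algebra, σ : A → A an algebra endomorphism, and x, y ∈ A. Then for every n ≥ 0, (x+y)^n = Σ_{k=0}^{n} Ŝ_{k,n−k}(1)·x^{n−k}. -/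
/-- The operator-valued shuffle type polynomials `Ŝ_{i,j}` built from two
operators `σ` and `D` on `A`: `Ŝ_{0,0} = id`, `Ŝ_{i,j} = σ∘Ŝ_{i,j−1} + D∘Ŝ_{i−1,j}`. -/
def Shat {A : Type*} [Ring A] (σ D : A → A) : ℕ → ℕ → A → A
  | 0, 0 => id
  | 0, j + 1 => σ ∘ Shat σ D 0 j
  | i + 1, 0 => D ∘ Shat σ D i 0
  | i + 1, j + 1 => σ ∘ Shat σ D (i + 1) j + D ∘ Shat σ D i (j + 1)

/-!
Left multiplication by `x + y` splits as `(x + y) * b = σ b * x + D b`. Applied to `Ŝ_{i,j}(a)` in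
a summand `Ŝ_{i,j}(a) * x ^ j`, the part `σ b * x` raises `j` and the part `D b` raises `i`, which
is exactly the recursion of the `Ŝ_{i,j}`.
-/

section Shat

open Finset.HasAntidiagonal (antidiagonal)

variable {A M : Type*} [Ring A] [AddCommMonoid M]

theorem sum_antidiagonal_succ_Shat (σ D : A → A) (f : ℕ → ℕ → A →+ M) (a : A) (n : ℕ) :
    ∑ p ∈ antidiagonal (n + 1), f p.1 p.2 (Shat σ D p.1 p.2 a) =
      ∑ p ∈ antidiagonal n,
        (f p.1 (p.2 + 1) (σ (Shat σ D p.1 p.2 a)) + f (p.1 + 1) p.2 (D (Shat σ D p.1 p.2 a))) := by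
  cases n with
  | zero => simp [Finset.Nat.antidiagonal_succ, Shat]
  | succ n =>
    -- Left: split off both ends `(0, n + 2)` and `(n + 2, 0)`. Right: split `i = 0` off the `σ`-sum
    -- and `j = 0` off the `D`-sum. Then a single clause of the recursion applies to each term.
    rw [Finset.sum_add_distrib, Finset.Nat.sum_antidiagonal_succ,
      Finset.Nat.sum_antidiagonal_succ', Finset.Nat.sum_antidiagonal_succ,
      Finset.Nat.sum_antidiagonal_succ']
    simp only [Shat, Function.comp_apply, Pi.add_apply, map_add, Finset.sum_add_distrib]
    abel

theorem pow_mul_eq_sum_antidiagonal_Shat {σ D : A → A} {x z : A}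
    (hz : ∀ b, z * b = σ b * x + D b) (a : A) (n : ℕ) :
    z ^ n * a = ∑ p ∈ antidiagonal n, Shat σ D p.1 p.2 a * x ^ p.2 := by
  induction n with
  | zero => simp [Shat]
  | succ n ih =>
    calc z ^ (n + 1) * a
        = ∑ p ∈ antidiagonal n, z * Shat σ D p.1 p.2 a * x ^ p.2 := by
          simp only [pow_succ', mul_assoc, ih, Finset.mul_sum]
      _ = ∑ p ∈ antidiagonal n,
            (σ (Shat σ D p.1 p.2 a) * x ^ (p.2 + 1) + D (Shat σ D p.1 p.2 a) * x ^ p.2) := by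
          simp only [hz, add_mul, pow_succ', mul_assoc]
      _ = ∑ p ∈ antidiagonal (n + 1), Shat σ D p.1 p.2 a * x ^ p.2 :=
          (sum_antidiagonal_succ_Shat σ D (fun _ j => AddMonoidHom.mulRight (x ^ j)) a n).symm

theorem stmt_9_general (σ : A → A) (x y a : A) (n : ℕ) :
    (x + y) ^ n * a =
      ∑ m ∈ Finset.range (n + 1),
        Shat σ (fun b => x * b - σ b * x + y * b) m (n - m) a * x ^ (n - m) := by
  have left_mul_split (b : A) : (x + y) * b = σ b * x + (x * b - σ b * x + y * b) := by
    noncomm_ring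
  rw [pow_mul_eq_sum_antidiagonal_Shat left_mul_split,
    Finset.Nat.sum_antidiagonal_eq_sum_range_succ_mk]

end Shat

/-- Theorem B: noncommutative binomial formula via the operator shuffle type
polynomials attached to the σ-twisted adjoint derivation `ad_σ x + y`. -/
theorem stmt_9 {k A : Type*} [CommRing k] [Ring A] [Algebra k A]
    (σ : A →ₐ[k] A) (x y : A) (n : ℕ) :
    (x + y) ^ n =
      ∑ m ∈ Finset.range (n + 1),
        Shat (⇑σ) (fun a => x * a - σ a * x + y * a) m (n - m) 1 * x ^ (n - m) := by
  simpa only [mul_one] using stmt_9_general σ x y 1 n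
end

section
/- Let A be a unital associative algebra, σ : A → A an algebra endomorphism, and x, y ∈ A. For m ≥ 0 define the operator D_m : A → A by D_m(a) = σ^m(x)·a − σ(a)·σ^m(x) + σ^m(y)·a. Then for all integers 1 ≤ k ≤ n, Ŝ_{k,n−k} = Σ_{0 ≤ m₁ ≤ m₂ ≤ ⋯ ≤ m_k ≤ n−k} D_{m₁}∘D_{m₂}∘⋯∘D_{m_k}∘σ^{n−k}. -/
/-!
Additive maps on `A` form a semiring under composition, so the identity can be proved for elements
`s`, `d₀, d₁, …` of any semiring with `s dₘ = dₘ₊₁ s`. There the right-hand side is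
`h_i(d₀, …, d_j) sʲ`, with `h_i` the ordered complete homogeneous polynomial. Separating the index
sequences that start with `0` from those that do not gives
`h_{i+1}(d₀, …, d_{j+1}) = d₀ h_i(d₀, …, d_{j+1}) + h_{i+1}(d₁, …, d_{j+1})`, and
`h_{i+1}(d₁, …, d_{j+1}) s = s h_{i+1}(d₀, …, d_j)` turns this into the recursion defining `Ŝ`.
For the operators `D_m` the relation `σ ∘ D_m = D_{m+1} ∘ σ` is the multiplicativity of `σ`.
-/

/-- The index set `0 ≤ m₁ ≤ ⋯ ≤ m_i ≤ j` of the sum, with `m₁, …, m_i` indexed by `Fin i`. -/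
def boundedMonotone (i j : ℕ) : Set (Fin i → ℕ) :=
  {m | Monotone m ∧ ∀ t, m t ≤ j}

namespace boundedMonotone

theorem finite (i j : ℕ) : (boundedMonotone i j).Finite :=
  (Set.finite_Iic fun _ => j).subset fun _ hm => hm.2

theorem zero_left (j : ℕ) : boundedMonotone 0 j = {0} := by
  ext m
  simp [boundedMonotone, Subsingleton.elim m 0, Monotone]

theorem zero_right (i : ℕ) : boundedMonotone i 0 = {0} := by
  ext m
  constructor
  · exact fun hm => funext fun t => Nat.le_zero.mp (hm.2 t)
  · rintro rfl
    exact ⟨monotone_const, fun _ => le_rfl⟩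

theorem cons_zero_mem_iff {i j : ℕ} {m : Fin i → ℕ} :
    (Fin.cons 0 m : Fin (i + 1) → ℕ) ∈ boundedMonotone (i + 1) j ↔ m ∈ boundedMonotone i j := by
  simp [boundedMonotone, monotone_iff_forall_lt, Fin.forall_fin_succ]

theorem add_one_mem_iff {i j : ℕ} {m : Fin i → ℕ} :
    m + 1 ∈ boundedMonotone i (j + 1) ↔ m ∈ boundedMonotone i j := by
  simp [boundedMonotone, Monotone]

theorem succ_succ (i j : ℕ) :
    boundedMonotone (i + 1) (j + 1) =
      Fin.cons 0 '' boundedMonotone i (j + 1) ∪ (· + 1) '' boundedMonotone (i + 1) j := by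
  apply Set.Subset.antisymm
  · intro m hm
    by_cases h0 : m 0 = 0
    · have hcons : Fin.cons 0 (Fin.tail m) = m := h0 ▸ Fin.cons_self_tail m
      exact .inl ⟨Fin.tail m, cons_zero_mem_iff.mp (hcons ▸ hm), hcons⟩
    · have hpos (t : Fin (i + 1)) : 1 ≤ m t :=
        (Nat.one_le_iff_ne_zero.mpr h0).trans (hm.1 (Fin.zero_le t))
      have hadd : m - 1 + 1 = m := funext fun t => Nat.sub_add_cancel (hpos t)
      exact .inr ⟨m - 1, add_one_mem_iff.mp (hadd.symm ▸ hm), hadd⟩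
  · rintro _ (⟨m, hm, rfl⟩ | ⟨m, hm, rfl⟩)
    · exact cons_zero_mem_iff.mpr hm
    · exact add_one_mem_iff.mpr hm

theorem finsum_mem_succ_succ {M : Type*} [AddCommMonoid M] (i j : ℕ) (f : (Fin (i + 1) → ℕ) → M) :
    ∑ᶠ m ∈ boundedMonotone (i + 1) (j + 1), f m =
      ∑ᶠ m ∈ boundedMonotone i (j + 1), f (Fin.cons 0 m) +
        ∑ᶠ m ∈ boundedMonotone (i + 1) j, f (m + 1) := by
  have hdisj : Disjoint (Fin.cons 0 '' boundedMonotone i (j + 1))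
      ((· + 1) '' boundedMonotone (i + 1) j) := by
    rw [Set.disjoint_left]
    rintro _ ⟨m, -, rfl⟩ ⟨m', -, h⟩
    exact Nat.succ_ne_zero _ (congrFun h 0)
  rw [succ_succ, finsum_mem_union hdisj ((finite _ _).image _) ((finite _ _).image _),
    finsum_mem_image (Fin.cons_right_injective _).injOn,
    finsum_mem_image (add_left_injective 1).injOn]

end boundedMonotone

theorem semiconjBy_prod_ofFn {M : Type*} [Monoid M] {a : M} {i : ℕ} {x y : Fin i → M}
    (h : ∀ t, SemiconjBy a (x t) (y t)) :
    SemiconjBy a (List.ofFn x).prod (List.ofFn y).prod := by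
  induction i with
  | zero => simp
  | succ i ih =>
    simp only [List.ofFn_succ, List.prod_cons]
    exact (h 0).mul_right (ih fun t => h t.succ)

section Semiring

variable {R : Type*} [Semiring R]

/-- The ordered (noncommutative) complete homogeneous polynomial of degree `i` in `d₀, …, d_j`:
the sum of `d_{m₁} ⋯ d_{m_i}` over `0 ≤ m₁ ≤ ⋯ ≤ m_i ≤ j`. -/
noncomputable def orderedHsymm (d : ℕ → R) (i j : ℕ) : R :=
  ∑ᶠ m ∈ boundedMonotone i j, (List.ofFn fun t => d (m t)).prod

theorem orderedHsymm_zero_left (d : ℕ → R) (j : ℕ) : orderedHsymm d 0 j = 1 := by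
  simp [orderedHsymm, boundedMonotone.zero_left]

theorem orderedHsymm_zero_right (d : ℕ → R) (i : ℕ) : orderedHsymm d i 0 = d 0 ^ i := by
  simp [orderedHsymm, boundedMonotone.zero_right]

theorem orderedHsymm_succ_succ (d : ℕ → R) (i j : ℕ) :
    orderedHsymm d (i + 1) (j + 1) =
      d 0 * orderedHsymm d i (j + 1) + orderedHsymm (fun m => d (m + 1)) (i + 1) j := by
  have hmul := (AddMonoidHom.mulLeft (d 0)).map_finsum_mem
    (fun m => (List.ofFn fun t => d (m t)).prod) (boundedMonotone.finite i (j + 1))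
  simp only [AddMonoidHom.coe_mulLeft] at hmul
  simp only [orderedHsymm, boundedMonotone.finsum_mem_succ_succ, hmul, List.ofFn_succ,
    List.prod_cons, Fin.cons_zero, Fin.cons_succ, Pi.add_apply, Pi.one_apply]

theorem semiconjBy_orderedHsymm {s : R} {d e : ℕ → R} (h : ∀ m, SemiconjBy s (d m) (e m))
    (i j : ℕ) : SemiconjBy s (orderedHsymm d i j) (orderedHsymm e i j) := by
  have hfin := boundedMonotone.finite i j
  calc s * orderedHsymm d i j
    _ = ∑ᶠ m ∈ boundedMonotone i j, s * (List.ofFn fun t => d (m t)).prod :=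
      (AddMonoidHom.mulLeft s).map_finsum_mem _ hfin
    _ = ∑ᶠ m ∈ boundedMonotone i j, (List.ofFn fun t => e (m t)).prod * s :=
      finsum_mem_congr rfl fun m _ => semiconjBy_prod_ofFn fun t => h (m t)
    _ = orderedHsymm e i j * s := ((AddMonoidHom.mulRight s).map_finsum_mem _ hfin).symm

/-- The shuffle type polynomial in two elements of a semiring: the sum of all words with `i`
letters `d` and `j` letters `s`. `Shat` is its evaluation at operators, see `coe_shufflePoly`. -/
def shufflePoly (s d : R) : ℕ → ℕ → R
  | 0, 0 => 1
  | 0, j + 1 => s * shufflePoly s d 0 j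
  | i + 1, 0 => d * shufflePoly s d i 0
  | i + 1, j + 1 => s * shufflePoly s d (i + 1) j + d * shufflePoly s d i (j + 1)

theorem shufflePoly_zero_left (s d : R) (j : ℕ) : shufflePoly s d 0 j = s ^ j := by
  induction j with
  | zero => simp [shufflePoly]
  | succ j ih => rw [shufflePoly, ih, pow_succ']

theorem shufflePoly_zero_right (s d : R) (i : ℕ) : shufflePoly s d i 0 = d ^ i := by
  induction i with
  | zero => simp [shufflePoly]
  | succ i ih => rw [shufflePoly, ih, pow_succ']

theorem shufflePoly_eq_orderedHsymm_mul_pow {s : R} {d : ℕ → R}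
    (h : ∀ m, SemiconjBy s (d m) (d (m + 1))) (i j : ℕ) :
    shufflePoly s (d 0) i j = orderedHsymm d i j * s ^ j := by
  induction i generalizing j with
  | zero => rw [shufflePoly_zero_left, orderedHsymm_zero_left, one_mul]
  | succ i ih_i =>
    induction j with
    | zero => rw [shufflePoly_zero_right, orderedHsymm_zero_right, pow_zero, mul_one]
    | succ j ih_j =>
      have hshift := (semiconjBy_orderedHsymm h (i + 1) j).eq
      rw [shufflePoly, ih_i, ih_j, orderedHsymm_succ_succ, add_mul, ← mul_assoc, ← mul_assoc,
        hshift, mul_assoc _ s, ← pow_succ', add_comm]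

end Semiring

theorem coe_shufflePoly {A : Type*} [Ring A] (σ D : AddMonoid.End A) (i j : ℕ) :
    ⇑(shufflePoly σ D i j) = Shat σ D i j := by
  fun_induction shufflePoly σ D i j with
  | case1 => rw [Shat, AddMonoid.End.coe_one]
  | case2 j ih => rw [Shat, ← ih, AddMonoid.End.coe_mul]
  | case3 i ih => rw [Shat, ← ih, AddMonoid.End.coe_mul]
  | case4 i j ih_σ ih_D =>
    rw [Shat, ← ih_σ, ← ih_D, ← AddMonoid.End.coe_mul, ← AddMonoid.End.coe_mul]
    rfl

theorem coe_prod_ofFn_mul {A : Type*} [AddZero A] {i : ℕ} (f : Fin i → AddMonoid.End A)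
    (g : AddMonoid.End A) :
    ⇑((List.ofFn f).prod * g) = (List.ofFn fun t => ⇑(f t)).foldr (· ∘ ·) g := by
  induction i with
  | zero => simp
  | succ i ih =>
    simp only [List.ofFn_succ, List.prod_cons, List.foldr_cons, mul_assoc, ← ih]
    rfl

theorem stmt_10_general {A : Type*} [Ring A] {σ : AddMonoid.End A} {d : ℕ → AddMonoid.End A}
    (h : ∀ m, SemiconjBy σ (d m) (d (m + 1))) (i j : ℕ) :
    Shat σ (d 0) i j =
      ∑ᶠ m ∈ {m : Fin i → ℕ | Monotone m ∧ ∀ t, m t ≤ j},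
        (List.ofFn fun t => ⇑(d (m t))).foldr (· ∘ ·) (σ^[j]) := by
  let evalAfterPow : AddMonoid.End A →+ A → A :=
    (AddMonoidHom.coeFn A A).comp (AddMonoidHom.mulRight (σ ^ j))
  calc Shat σ (d 0) i j
    _ = evalAfterPow (orderedHsymm d i j) := by
      rw [← coe_shufflePoly, shufflePoly_eq_orderedHsymm_mul_pow h]
      rfl
    _ = ∑ᶠ m ∈ boundedMonotone i j, evalAfterPow (List.ofFn fun t => d (m t)).prod :=
      evalAfterPow.map_finsum_mem _ (boundedMonotone.finite i j)
    _ = _ := finsum_mem_congr rfl fun m _ => by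
      rw [← AddMonoid.End.coe_pow, ← coe_prod_ofFn_mul]
      rfl

section TwistedOperator

variable {A : Type*} [NonUnitalNonAssocRing A]

/-- The operator `D(a) = ad_σx(a) + y·a`, where `ad_σx(a) = x·a − σ(a)·x` is the `σ`-twisted
adjoint. The paper's `D_m` is `twistedOperator σ (σ^m(x)) (σ^m(y))`. -/
def twistedOperator (σ : A →+ A) (x y : A) : AddMonoid.End A :=
  AddMonoidHom.mulLeft x - (AddMonoidHom.mulRight x).comp σ + AddMonoidHom.mulLeft y

theorem twistedOperator_apply (σ : A →+ A) (x y a : A) :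
    twistedOperator σ x y a = x * a - σ a * x + y * a := rfl

theorem semiconjBy_twistedOperator {F : Type*} [FunLike F A A] [NonUnitalRingHomClass F A A]
    (σ : F) (x y : A) :
    SemiconjBy (M := AddMonoid.End A) (σ : A →+ A) (twistedOperator σ x y)
      (twistedOperator σ (σ x) (σ y)) := by
  refine AddMonoidHom.ext fun a => ?_
  change σ (twistedOperator σ x y a) = twistedOperator σ (σ x) (σ y) (σ a)
  simp [twistedOperator_apply]

end TwistedOperator

/-- `Ŝ_{k,n−k} = Σ_{0 ≤ m₁ ≤ ⋯ ≤ m_k ≤ n−k} D_{m₁}∘⋯∘D_{m_k}∘σ^{n−k}`, where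
`D_m(a) = σ^m(x)·a − σ(a)·σ^m(x) + σ^m(y)·a`. -/
theorem stmt_10 {k A : Type*} [CommRing k] [Ring A] [Algebra k A]
    (σ : A →ₐ[k] A) (x y : A) (n K : ℕ) (h1 : 1 ≤ K) (h2 : K ≤ n) :
    Shat (⇑σ) (fun a => x * a - σ a * x + y * a) K (n - K) =
      ∑ᶠ m ∈ {m : Fin K → ℕ | Monotone m ∧ ∀ i, m i ≤ n - K},
        (List.ofFn fun i : Fin K =>
            fun a => (⇑σ)^[m i] x * a - σ a * (⇑σ)^[m i] x + (⇑σ)^[m i] y * a).foldr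
          (· ∘ ·) ((⇑σ)^[n - K]) := by
  refine stmt_10_general (σ := (σ : A →+ A))
    (d := fun m => twistedOperator σ (σ^[m] x) (σ^[m] y)) (fun m => ?_) K (n - K)
  simpa only [Function.iterate_succ_apply'] using semiconjBy_twistedOperator σ _ _
end

section
/- Let A be a unital associative algebra and x, y ∈ A. Then for every n ≥ 0, (x+y)^n = Σ_{k=0}^{n} binom(n,k)·B_k·x^{n−k} and (x+y)^n = Σ_{k=0}^{n} binom(n,k)·x^{n−k}·B*_k. -/
/-- The Bell differential polynomials: `B₀ = 1`, `B_{k+1} = [x, B_k] + y·B_k`. -/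
def Bell {A : Type*} [Ring A] (x y : A) : ℕ → A
  | 0 => 1
  | n + 1 => x * Bell x y n - Bell x y n * x + y * Bell x y n

/-- The dual Bell differential polynomials: `B*₀ = 1`, `B*_{k+1} = [B*_k, x] + B*_k·y`. -/
def BellStar {A : Type*} [Ring A] (x y : A) : ℕ → A
  | 0 => 1
  | n + 1 => BellStar x y n * x - x * BellStar x y n + BellStar x y n * y

/-!
Write `ℓ a` and `r a` for left and right multiplication by `a`. The Bell recursion iterates the
operator `ℓ (x + y) - r x`, which commutes with `r x` because `A` is associative. Hence the
commutative binomial theorem expands `ℓ (x + y) ^ n = ((ℓ (x + y) - r x) + r x) ^ n`, and evaluating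
at `1` gives the first formula. The dual formula is the first one in the opposite algebra.
-/

open LinearMap (mulLeft mulRight)
open MulOpposite (op)

section

variable (R : Type*) {A : Type*} [CommSemiring R] [Ring A] [Algebra R A]

theorem pow_mul_eq_sum_choose_smul_mulLeft_sub_mulRight_pow (a x b : A) (n : ℕ) :
    a ^ n * b = ∑ m ∈ Finset.range (n + 1),
      n.choose m • (((mulLeft R a - mulRight R x) ^ m) b * x ^ (n - m)) := by
  have commute_sub : Commute (mulLeft R a - mulRight R x) (mulRight R x) :=
    (LinearMap.commute_mulLeft_right a x).sub_left (Commute.refl _)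
  calc a ^ n * b
      = ((mulLeft R a - mulRight R x + mulRight R x) ^ n) b := by
        rw [sub_add_cancel, LinearMap.pow_mulLeft, LinearMap.mulLeft_apply]
    _ = ∑ m ∈ Finset.range (n + 1),
          (n.choose m • (mulRight R x ^ (n - m) * (mulLeft R a - mulRight R x) ^ m)) b := by
        simp only [commute_sub.add_pow, ← nsmul_eq_mul', (commute_sub.pow_pow _ _).eq,
          LinearMap.sum_apply]
    _ = ∑ m ∈ Finset.range (n + 1),
          n.choose m • (((mulLeft R a - mulRight R x) ^ m) b * x ^ (n - m)) := by
        simp only [LinearMap.smul_apply, Module.End.mul_apply, LinearMap.pow_mulRight,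
          LinearMap.mulRight_apply]

theorem bell_eq_mulLeft_sub_mulRight_pow_apply_one (x y : A) (n : ℕ) :
    Bell x y n = ((mulLeft R (x + y) - mulRight R x) ^ n) 1 := by
  induction n with
  | zero => rfl
  | succ n ih =>
    rw [pow_succ', Module.End.mul_apply, ← ih, LinearMap.sub_apply, LinearMap.mulLeft_apply,
      LinearMap.mulRight_apply, Bell, add_mul, sub_add_eq_add_sub]

end

section

variable {A : Type*} [Ring A] (x y : A) (n : ℕ)

theorem add_pow_eq_sum_choose_smul_bell_mul_pow :
    (x + y) ^ n = ∑ m ∈ Finset.range (n + 1), n.choose m • (Bell x y m * x ^ (n - m)) := by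
  simpa only [mul_one, ← bell_eq_mulLeft_sub_mulRight_pow_apply_one] using
    pow_mul_eq_sum_choose_smul_mulLeft_sub_mulRight_pow ℤ (x + y) x 1 n

theorem bell_op : Bell (op x) (op y) n = op (BellStar x y n) := by
  induction n with
  | zero => rfl
  | succ n ih =>
    simp only [Bell, BellStar, ih, MulOpposite.op_add, MulOpposite.op_sub, MulOpposite.op_mul]

theorem add_pow_eq_sum_choose_smul_pow_mul_bellStar :
    (x + y) ^ n = ∑ m ∈ Finset.range (n + 1), n.choose m • (x ^ (n - m) * BellStar x y m) := by
  apply MulOpposite.op_injective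
  simpa only [bell_op, MulOpposite.op_add, MulOpposite.op_pow, MulOpposite.op_mul,
    MulOpposite.op_smul, Finset.op_sum] using
    add_pow_eq_sum_choose_smul_bell_mul_pow (op x) (op y) n

end

/-- Schimming–Rida binomial formula via Bell differential polynomials. -/
theorem stmt_11 {A : Type*} [Ring A] (x y : A) (n : ℕ) :
    (x + y) ^ n = ∑ m ∈ Finset.range (n + 1), n.choose m • (Bell x y m * x ^ (n - m)) ∧
    (x + y) ^ n = ∑ m ∈ Finset.range (n + 1), n.choose m • (x ^ (n - m) * BellStar x y m) :=
  ⟨add_pow_eq_sum_choose_smul_bell_mul_pow x y n, add_pow_eq_sum_choose_smul_pow_mul_bellStar x y n⟩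
end

section
/- Let k be a commutative ring, q ∈ k, A a unital associative k-algebra and x, y ∈ A. Then for every n ≥ 0, (x+y)^n = Σ_{k=0}^{n} binom(n,k)_q · B̂_{k,q} · x^{n−k}. -/
/-- The q-integer `(m)_q = 1 + q + ⋯ + q^{m−1}`. -/
def qInt {k : Type*} [CommRing k] (q : k) (m : ℕ) : k := ∑ i ∈ Finset.range m, q ^ i

/-- The q-factorial `(m)_q! = (1)_q (2)_q ⋯ (m)_q`. -/
def qFact {k : Type*} [CommRing k] (q : k) : ℕ → k
  | 0 => 1
  | m + 1 => qFact q m * qInt q (m + 1)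

/-- The Gaussian binomial coefficients: `binom(n,0)_q = 1`, `binom(0,k+1)_q = 0`,
`binom(n,k)_q = binom(n−1,k−1)_q + q^k binom(n−1,k)_q`. -/
def qBinom {k : Type*} [CommRing k] (q : k) : ℕ → ℕ → k
  | _, 0 => 1
  | 0, _ + 1 => 0
  | n + 1, m + 1 => qBinom q n m + q ^ (m + 1) * qBinom q n (m + 1)

/-- The partial q-Bell differential polynomials `B_{n,k}`:
`B_{0,0} = 1`, `B_{n,0} = 0` for `n > 0`, `B_{n,k} = 0` for `k > n`, and
`B_{n,k} = y·B_{n−1,k−1} + x·B_{n−1,k} − q^{n−1}·B_{n−1,k}·x`. -/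
def qBellP {k A : Type*} [CommRing k] [Ring A] [Algebra k A] (q : k) (x y : A) :
    ℕ → ℕ → A
  | 0, 0 => 1
  | _ + 1, 0 => 0
  | 0, _ + 1 => 0
  | n + 1, m + 1 =>
      y * qBellP q x y n m + x * qBellP q x y n (m + 1)
        - q ^ n • (qBellP q x y n (m + 1) * x)

/-!
Left multiplication by `x + y` sends `B̂_n` to `B̂_{n+1} + q^n B̂_n x`. For any sequence obeying
such a rule, applying left multiplication `n` times amounts to choosing at each step whether to
raise the index or to append an `x` at the cost of `q^index`; the Gaussian binomial coefficients
count these choices, because that alternative is exactly their Pascal recursion.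
-/

open Finset.HasAntidiagonal (antidiagonal)

section GaussianBinomial

variable {k : Type*} [CommRing k] (q : k)

theorem qBinom_zero_right (n : ℕ) : qBinom q n 0 = 1 := by
  cases n <;> rfl

theorem qBinom_eq_zero_of_lt : ∀ {n m : ℕ}, n < m → qBinom q n m = 0
  | 0, _ + 1, _ => rfl
  | n + 1, m + 1, h => by
    have hm : n < m := Nat.succ_lt_succ_iff.mp h
    simp [qBinom, qBinom_eq_zero_of_lt hm, qBinom_eq_zero_of_lt (hm.trans m.lt_succ_self)]

theorem sum_antidiagonal_qBinom_succ_smul {M : Type*} [AddCommMonoid M] [Module k M]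
    (f : ℕ → ℕ → M) (n : ℕ) :
    ∑ ij ∈ antidiagonal (n + 1), qBinom q (n + 1) ij.1 • f ij.1 ij.2 =
      ∑ ij ∈ antidiagonal n,
        qBinom q n ij.1 • (f (ij.1 + 1) ij.2 + q ^ ij.1 • f ij.1 (ij.2 + 1)) := by
  -- Both sides sum `(q ^ i * qBinom q n i) • f i j` over `i + j = n + 1`: the left one splits off
  -- the term `i = 0`, the right one drops the vanishing term `i = n + 1`.
  have sum_shift : f 0 (n + 1) + ∑ ij ∈ antidiagonal n,
        (q ^ (ij.1 + 1) * qBinom q n (ij.1 + 1)) • f (ij.1 + 1) ij.2 =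
      ∑ ij ∈ antidiagonal n, (q ^ ij.1 * qBinom q n ij.1) • f ij.1 (ij.2 + 1) := by
    simpa [qBinom_zero_right, qBinom_eq_zero_of_lt q n.lt_succ_self] using
      (Finset.Nat.sum_antidiagonal_succ
        (n := n) (f := fun ij => (q ^ ij.1 * qBinom q n ij.1) • f ij.1 ij.2)).symm.trans
        Finset.Nat.sum_antidiagonal_succ'
  simp only [Finset.Nat.sum_antidiagonal_succ, qBinom, one_smul, add_smul, smul_add, smul_smul,
    Finset.sum_add_distrib]
  rw [add_left_comm, sum_shift]
  simp only [mul_comm]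

theorem pow_mul_eq_sum_qBinom_smul {A : Type*} [Semiring A] [Algebra k A] {z x : A} {b : ℕ → A}
    (hb : ∀ m, z * b m = b (m + 1) + q ^ m • (b m * x)) (n : ℕ) :
    z ^ n * b 0 = ∑ ij ∈ antidiagonal n, qBinom q n ij.1 • (b ij.1 * x ^ ij.2) := by
  induction n with
  | zero => simp [qBinom]
  | succ n ih =>
    have mul_term (i j : ℕ) :
        z * (b i * x ^ j) = b (i + 1) * x ^ j + q ^ i • (b i * x ^ (j + 1)) := by
      rw [← mul_assoc, hb, add_mul, smul_mul_assoc, mul_assoc, ← pow_succ']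
    rw [pow_succ', mul_assoc, ih, Finset.mul_sum,
      sum_antidiagonal_qBinom_succ_smul q fun i j => b i * x ^ j]
    simp only [mul_smul_comm, mul_term]

end GaussianBinomial

section BellPolynomial

variable {k A : Type*} [CommRing k] [Ring A] [Algebra k A] (q : k) (x y : A)

theorem qBellP_eq_zero_of_lt : ∀ {n m : ℕ}, n < m → qBellP q x y n m = 0
  | 0, _ + 1, _ => rfl
  | n + 1, m + 1, h => by
    have hm : n < m := Nat.succ_lt_succ_iff.mp h
    simp [qBellP, qBellP_eq_zero_of_lt hm, qBellP_eq_zero_of_lt (hm.trans m.lt_succ_self)]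

/-- The q-Bell differential polynomial `B̂_{n,q} = ∑_{j ≤ n} B_{n,j}` in `x` and `y`. -/
def qBell (n : ℕ) : A := ∑ j ∈ Finset.range (n + 1), qBellP q x y n j

theorem qBell_zero : qBell q x y 0 = 1 := by
  simp [qBell, qBellP]

theorem qBell_succ (n : ℕ) :
    qBell q x y (n + 1) = (x + y) * qBell q x y n - q ^ n • (qBell q x y n * x) := by
  let δ (j : ℕ) : A := x * qBellP q x y n j - q ^ n • (qBellP q x y n j * x)
  have δ_zero : δ 0 = 0 := by
    cases n <;> simp [δ, qBellP]
  have δ_last : δ (n + 1) = 0 := by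
    simp [δ, qBellP_eq_zero_of_lt q x y n.lt_succ_self]
  have sum_δ_succ : ∑ j ∈ Finset.range (n + 1), δ (j + 1) = ∑ j ∈ Finset.range (n + 1), δ j := by
    simpa [δ_zero, δ_last] using
      (Finset.sum_range_succ' δ (n + 1)).symm.trans (Finset.sum_range_succ δ (n + 1))
  calc qBell q x y (n + 1)
      = ∑ j ∈ Finset.range (n + 1), (y * qBellP q x y n j + δ (j + 1)) := by
        simp only [qBell, Finset.sum_range_succ' _ (n + 1), qBellP, add_zero, δ, add_sub_assoc]
    _ = ∑ j ∈ Finset.range (n + 1), (y * qBellP q x y n j + δ j) := by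
        rw [Finset.sum_add_distrib, sum_δ_succ, ← Finset.sum_add_distrib]
    _ = y * qBell q x y n + (x * qBell q x y n - q ^ n • (qBell q x y n * x)) := by
        simp only [qBell, δ, Finset.sum_add_distrib, Finset.sum_sub_distrib, Finset.mul_sum,
          Finset.sum_mul, Finset.smul_sum]
    _ = (x + y) * qBell q x y n - q ^ n • (qBell q x y n * x) := by
        rw [add_mul]
        abel

end BellPolynomial

/-- Binomial formula via the q-Bell differential polynomials
`B̂_{k,q} = Σ_{j=0}^{k} B_{k,j}`. -/
theorem stmt_12 {k A : Type*} [CommRing k] [Ring A] [Algebra k A]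
    (q : k) (x y : A) (n : ℕ) :
    (x + y) ^ n =
      ∑ m ∈ Finset.range (n + 1),
        qBinom q n m •
          ((∑ j ∈ Finset.range (m + 1), qBellP q x y m j) * x ^ (n - m)) := by
  have add_mul_qBell (m : ℕ) :
      (x + y) * qBell q x y m = qBell q x y (m + 1) + q ^ m • (qBell q x y m * x) := by
    rw [qBell_succ, sub_add_cancel]
  calc (x + y) ^ n
      = (x + y) ^ n * qBell q x y 0 := by rw [qBell_zero, mul_one]
    _ = ∑ ij ∈ antidiagonal n, qBinom q n ij.1 • (qBell q x y ij.1 * x ^ ij.2) :=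
        pow_mul_eq_sum_qBinom_smul q add_mul_qBell n
    _ = ∑ m ∈ Finset.range (n + 1), qBinom q n m • (qBell q x y m * x ^ (n - m)) :=
        Finset.Nat.sum_antidiagonal_eq_sum_range_succ
          (fun i j => qBinom q n i • (qBell q x y i * x ^ j)) n
end

section
/- Let k be a field, q ∈ k and n ≥ 1 an integer such that (m)_q ≠ 0 for all 1 ≤ m ≤ n. Let A be a unital associative k-algebra and x, y ∈ A such that y^{(v−1)}·y^{(u−1)} = q^v·y^{(u−1)}·y^{(v−1)} for all integers 1 ≤ u < v. Then (x+y)^n = Σ ((n)_q! / ((∏_{i=1}^{n} ((i)_q!)^{t_i}·(t_i)_{q^i}!)·(t)_q!)) · y^{t₁}·(y^{(1)})^{t₂}⋯(y^{(n−1)})^{tₙ}·x^{t}, where the sum is over all (t₁, …, tₙ, t) ∈ ℕ^{n+1} with t₁ + 2t₂ + ⋯ + n·tₙ + t = n (under the hypothesis on q all the denominators are nonzero elements of k). -/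
/-- `y^{(0)} = y`, `y^{(m)} = x·y^{(m−1)} − q^m·y^{(m−1)}·x`. -/
def yd {k A : Type*} [CommRing k] [Ring A] [Algebra k A] (q : k) (x y : A) : ℕ → A
  | 0 => y
  | m + 1 => x * yd q x y m - q ^ (m + 1) • (yd q x y m * x)

/-!
Divide by `(n)_q!`. The divided sums `H N` on the right-hand side satisfy
`H N * (x + y) = (N + 1)_q • H (N + 1)`, as follows. Multiplying by `x` on the right raises the
exponent of `x`. For `y`, first move it across the divided power of `x`:
`x^t / (t)_q! * y = ∑_{j + m = t} q^m y^{(j)} / (j)_q! * x^m / (m)_q!`,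
then move `y^{(j)}` to the left across the `y^{(i)}` with `i > j`, which produces powers of `q` by
the commutation hypothesis. In the result, each monomial of degree `N + 1` is counted once for each
of its blocks `x^t`, `(y^{(j)})^{t_{j+1}}`, and these contributions add up to `(N + 1)_q` because
`(a + b)_q = (a)_q + q^a (b)_q`.
-/

section QInt

variable {k : Type*} [CommRing k] (q : k)

theorem qInt_zero : qInt q 0 = 0 := Finset.sum_range_zero _

theorem qInt_add (a b : ℕ) : qInt q (a + b) = qInt q a + q ^ a * qInt q b := by
  simp only [qInt, Finset.sum_range_add, Finset.mul_sum, pow_add]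

theorem qInt_mul (a b : ℕ) : qInt q (a * b) = qInt q a * qInt (q ^ a) b := by
  induction b with
  | zero => simp [qInt_zero]
  | succ b ih =>
    have hb : qInt (q ^ a) (b + 1) = qInt (q ^ a) b + (q ^ a) ^ b := Finset.sum_range_succ _ _
    rw [Nat.mul_succ, qInt_add, ih, hb, pow_mul]
    ring

theorem qInt_add_sum {r : ℕ} (t : ℕ) (a : Fin r → ℕ) :
    qInt q (t + ∑ j, a j) = qInt q t + ∑ j, q ^ (t + ∑ i > j, a i) * qInt q (a j) := by
  induction r with
  | zero => simp
  | succ r ih =>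
    rw [Fin.sum_univ_succ, Fin.sum_univ_succ, add_comm (a 0), ← add_assoc, qInt_add, ih]
    simp only [Fin.sum_Ioi_succ, Fin.sum_Ioi_zero]
    ring

end QInt

section QCommuting

variable {k A : Type*} [CommSemiring k] [Semiring A] [Algebra k A]

theorem pow_mul_eq_smul_mul_pow {c : k} {a b : A} (h : b * a = c • (a * b)) (m : ℕ) :
    b ^ m * a = c ^ m • (a * b ^ m) := by
  have hab : SemiconjBy a (c • b) b := by rw [SemiconjBy, mul_smul_comm, h]
  rw [← (hab.pow_right m).eq, smul_pow, mul_smul_comm]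

theorem prod_ofFn_pow_mul {r : ℕ} {c : Fin r → k} {z : Fin r → A} {a : A}
    (h : ∀ i, z i * a = c i • (a * z i)) (p : Fin r → ℕ) :
    (List.ofFn fun i => z i ^ p i).prod * a =
      (∏ i, c i ^ p i) • (a * (List.ofFn fun i => z i ^ p i).prod) := by
  induction r with
  | zero => simp
  | succ r ih =>
    simp only [List.ofFn_succ, List.prod_cons, Fin.prod_univ_succ]
    rw [mul_assoc, ih (c := fun i => c i.succ) (fun i => h i.succ), mul_smul_comm, ← mul_assoc,
      pow_mul_eq_smul_mul_pow (h 0), smul_mul_assoc, smul_smul, mul_assoc, mul_comm (c 0 ^ p 0)]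

theorem prod_ofFn_pow_mul_apply {r : ℕ} {c : Fin r → k} {z : Fin r → A} {j : Fin r}
    (h : ∀ i, j < i → z i * z j = c i • (z j * z i)) (p : Fin r → ℕ) :
    (List.ofFn fun i => z i ^ p i).prod * z j =
      (∏ i > j, c i ^ p i) • (List.ofFn fun i => z i ^ (p + Pi.single j 1 : Fin r → ℕ) i).prod := by
  induction r with
  | zero => exact j.elim0
  | succ r ih =>
    simp only [List.ofFn_succ, List.prod_cons, mul_assoc]
    cases j using Fin.cases with
    | zero =>
      rw [prod_ofFn_pow_mul (c := fun i => c i.succ) (fun i => h i.succ i.succ_pos), mul_smul_comm,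
        ← mul_assoc, ← pow_succ, Fin.prod_Ioi_zero]
      simp
    | succ j =>
      rw [ih (c := fun i => c i.succ) (fun i hi => h i.succ (Fin.succ_lt_succ_iff.mpr hi)),
        mul_smul_comm, Fin.prod_Ioi_succ]
      simp [Pi.single_apply, Fin.succ_inj]

end QCommuting

section DividedPower

open Finset.HasAntidiagonal (antidiagonal mem_antidiagonal)

open scoped Ring

variable {k A : Type*} [CommRing k] [Ring A] [Algebra k A]

theorem inverse_mul_mul_cancel_right {R : Type*} [CommMonoidWithZero R] (a : R) {b : R}
    (hb : IsUnit b) : (a * b)⁻¹ʳ * b = a⁻¹ʳ := by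
  rw [Ring.mul_inverse_rev, mul_right_comm, Ring.inverse_mul_cancel b hb, one_mul]

theorem mul_yd (q : k) (x y : A) (m : ℕ) :
    x * yd q x y m = yd q x y (m + 1) + q ^ (m + 1) • (yd q x y m * x) := by
  rw [yd, sub_add_cancel]

theorem qInt_smul_sum_antidiagonal {q : k} {t : ℕ}
    (hq : ∀ m, 1 ≤ m → m ≤ t + 1 → IsUnit (qInt q m)) (f : ℕ → ℕ → A) :
    qInt q (t + 1) • ∑ ij ∈ antidiagonal (t + 1),
        (qFact q ij.1 * qFact q ij.2)⁻¹ʳ • f ij.1 ij.2 =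
      ∑ ij ∈ antidiagonal t, (qFact q ij.1 * qFact q ij.2)⁻¹ʳ •
        (f (ij.1 + 1) ij.2 + q ^ ij.1 • f ij.1 (ij.2 + 1)) := by
  have split (ij) (hij : ij ∈ antidiagonal (t + 1)) :
      qInt q (t + 1) • (qFact q ij.1 * qFact q ij.2)⁻¹ʳ • f ij.1 ij.2 =
        (qInt q ij.1 * (qFact q ij.1 * qFact q ij.2)⁻¹ʳ) • f ij.1 ij.2 +
        (q ^ ij.1 * qInt q ij.2 * (qFact q ij.1 * qFact q ij.2)⁻¹ʳ) • f ij.1 ij.2 := by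
    rw [← mem_antidiagonal.mp hij, qInt_add, smul_smul, add_mul, add_smul]
  rw [Finset.smul_sum, Finset.sum_congr rfl split, Finset.sum_add_distrib,
    Finset.Nat.sum_antidiagonal_succ, Finset.Nat.sum_antidiagonal_succ', qInt_zero]
  simp only [zero_mul, mul_zero, zero_smul, zero_add, ← Finset.sum_add_distrib]
  refine Finset.sum_congr rfl fun ij hij => ?_
  have hsum : ij.1 + ij.2 = t := mem_antidiagonal.mp hij
  have left : qInt q (ij.1 + 1) * (qFact q (ij.1 + 1) * qFact q ij.2)⁻¹ʳ =
      (qFact q ij.1 * qFact q ij.2)⁻¹ʳ := by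
    rw [qFact, mul_right_comm, mul_comm (qInt q _),
      inverse_mul_mul_cancel_right _ (hq _ (by omega) (by omega))]
  have right : qInt q (ij.2 + 1) * (qFact q ij.1 * qFact q (ij.2 + 1))⁻¹ʳ =
      (qFact q ij.1 * qFact q ij.2)⁻¹ʳ := by
    rw [qFact, ← mul_assoc, mul_comm (qInt q _),
      inverse_mul_mul_cancel_right _ (hq _ (by omega) (by omega))]
  rw [left, mul_assoc, right, smul_add, smul_smul, mul_comm (q ^ ij.1)]

theorem inverse_qFact_smul_pow_mul {q : k} (x y : A) {t : ℕ}
    (hq : ∀ m, 1 ≤ m → m ≤ t → IsUnit (qInt q m)) :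
    (qFact q t)⁻¹ʳ • (x ^ t * y) = ∑ ij ∈ antidiagonal t,
      (qFact q ij.1 * qFact q ij.2)⁻¹ʳ • (q ^ ij.2 • (yd q x y ij.1 * x ^ ij.2)) := by
  induction t with
  | zero => simp [qFact, yd]
  | succ t ih =>
    have hunit : IsUnit (qInt q (t + 1)) := hq _ (by omega) le_rfl
    refine hunit.smul_left_cancel.mp ?_
    calc qInt q (t + 1) • (qFact q (t + 1))⁻¹ʳ • (x ^ (t + 1) * y)
        = x * ((qFact q t)⁻¹ʳ • (x ^ t * y)) := by
          rw [smul_smul, mul_comm, qFact, inverse_mul_mul_cancel_right _ hunit, pow_succ',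
            mul_assoc, mul_smul_comm]
      _ = _ := by
          rw [ih fun m h1 h2 => hq m h1 (by omega), Finset.mul_sum,
            qInt_smul_sum_antidiagonal hq fun j m => q ^ m • (yd q x y j * x ^ m)]
          refine Finset.sum_congr rfl fun ij _ => ?_
          rw [mul_smul_comm, mul_smul_comm, ← mul_assoc, mul_yd, add_mul, smul_mul_assoc,
            mul_assoc, ← pow_succ']
          module

end DividedPower

section BellIndex

/-- The exponents `((t₁, …, t_r), t)` of the monomials
`y^{t₁} (y^{(1)})^{t₂} ⋯ (y^{(r-1)})^{t_r} x^t` of total degree `N`, where `y^{(i)}` has degree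
`i + 1` and `x` has degree `1`; the entry at `i : Fin r` is `t_{i+1}`. The bounds `N + 1` only
serve to make the set finite. -/
def bellIndex (r N : ℕ) : Finset ((Fin r → ℕ) × ℕ) :=
  {s ∈ (Fintype.piFinset fun _ => Finset.range (N + 1)) ×ˢ Finset.range (N + 1) |
    (∑ i, (i.val + 1) * s.1 i) + s.2 = N}

variable {r N : ℕ} {s : (Fin r → ℕ) × ℕ}

theorem succ_mul_apply_le_sum (p : Fin r → ℕ) (j : Fin r) :
    (j.val + 1) * p j ≤ ∑ i, (i.val + 1) * p i :=
  Finset.single_le_sum (f := fun i : Fin r => (i.val + 1) * p i) (fun _ _ => Nat.zero_le _)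
    (Finset.mem_univ j)

theorem mem_bellIndex : s ∈ bellIndex r N ↔ (∑ i, (i.val + 1) * s.1 i) + s.2 = N := by
  simp only [bellIndex, Finset.mem_filter, Finset.mem_product, Fintype.mem_piFinset,
    Finset.mem_range, and_iff_right_iff_imp]
  rintro rfl
  refine ⟨fun i => ?_, by omega⟩
  have hi := succ_mul_apply_le_sum s.1 i
  nlinarith

theorem bellIndex_zero : bellIndex r 0 = {0} := by
  ext s
  simp [mem_bellIndex, Prod.ext_iff, funext_iff]

theorem sum_succ_mul_add_single (p : Fin r → ℕ) (j : Fin r) :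
    ∑ i : Fin r, (i.val + 1) * (p + Pi.single j 1 : Fin r → ℕ) i =
      (∑ i, (i.val + 1) * p i) + (j.val + 1) := by
  simp [mul_add, Finset.sum_add_distrib, Pi.single_apply]

/-- The exponent obtained by replacing a factor `x ^ j` by `y^{(j)}`, that is by using up `j` of the
letters `x` together with one new letter `y`. The subtraction is meant for `j ≤ s.2`. -/
def absorb (j : Fin r) (s : (Fin r → ℕ) × ℕ) : (Fin r → ℕ) × ℕ :=
  (s.1 + Pi.single j 1, s.2 - j)

theorem absorb_mem_bellIndex {j : Fin r} (hs : s ∈ bellIndex r N) (hj : j.val ≤ s.2) :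
    absorb j s ∈ bellIndex r (N + 1) := by
  rw [mem_bellIndex] at hs ⊢
  simp only [absorb, sum_succ_mul_add_single]
  omega

variable {M : Type*} [AddCommMonoid M]

theorem sum_bellIndex_add_one (f : (Fin r → ℕ) × ℕ → M) :
    ∑ s ∈ bellIndex r N, f (s.1, s.2 + 1) = ∑ s ∈ bellIndex r (N + 1) with s.2 ≠ 0, f s := by
  refine Finset.sum_nbij' (fun s => (s.1, s.2 + 1)) (fun s => (s.1, s.2 - 1)) ?_ ?_ ?_ ?_
    (fun _ _ => rfl) <;>
  · simp only [Finset.mem_filter, mem_bellIndex, Prod.forall, Prod.mk.injEq]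
    grind

theorem sum_bellIndex_absorb (j : Fin r) (f : (Fin r → ℕ) × ℕ → M) :
    ∑ s ∈ bellIndex r N with j.val ≤ s.2, f (absorb j s) =
      ∑ s ∈ bellIndex r (N + 1) with s.1 j ≠ 0, f s := by
  have restore {p : Fin r → ℕ} (hp : p j ≠ 0) : p - Pi.single j 1 + Pi.single j 1 = p := by
    refine tsub_add_cancel_of_le fun i => ?_
    rcases eq_or_ne i j with rfl | hij
    · simpa using Nat.one_le_iff_ne_zero.mpr hp
    · simp [hij]
  refine Finset.sum_nbij' (absorb j) (fun s => (s.1 - Pi.single j 1, s.2 + j)) ?_ ?_ ?_ ?_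
    (fun _ _ => rfl)
  · intro s hs
    rw [Finset.mem_filter] at hs ⊢
    exact ⟨absorb_mem_bellIndex hs.1 hs.2, by simp [absorb]⟩
  · intro s hs
    rw [Finset.mem_filter, mem_bellIndex] at hs ⊢
    have hsum := sum_succ_mul_add_single (s.1 - Pi.single j 1) j
    rw [restore hs.2] at hsum
    dsimp only
    omega
  · intro s hs
    have hj : j.val ≤ s.2 := (Finset.mem_filter.mp hs).2
    simp [absorb, Nat.sub_add_cancel hj]
  · intro s hs
    simp [absorb, restore (Finset.mem_filter.mp hs).2]

theorem sum_antidiagonal_eq_sum_fin {t : ℕ} (ht : t < r) (f : ℕ × ℕ → M) :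
    ∑ ij ∈ Finset.HasAntidiagonal.antidiagonal t, f ij =
      ∑ j : Fin r with j.val ≤ t, f (j, t - j) := by
  have hrange : {j ∈ Finset.range r | j ≤ t} = Finset.range (t + 1) := by
    ext j
    simp only [Finset.mem_filter, Finset.mem_range]
    omega
  rw [Finset.Nat.sum_antidiagonal_eq_sum_range_succ_mk, Nat.succ_eq_add_one, ← hrange,
    Finset.sum_filter, Finset.sum_filter, ← Fin.sum_univ_eq_sum_range]

end BellIndex

section BellTerm

open scoped Ring

variable {k A : Type*} [CommRing k] [Ring A] [Algebra k A] {r N : ℕ}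

/-- The denominator `∏ i, ((i)_q!)^{t_i} (t_i)_{q^i}!` attached to the exponents `p = (t₁, …, t_r)`,
with `t_{i+1}` stored at `i : Fin r`. -/
def bellDenom (q : k) (p : Fin r → ℕ) : k :=
  ∏ i : Fin r, (qFact q (i.val + 1) ^ p i * qFact (q ^ (i.val + 1)) (p i))

/-- The ordered monomial `y^{t₁} (y^{(1)})^{t₂} ⋯ (y^{(r-1)})^{t_r}`. -/
def ydMonomial (q : k) (x y : A) (p : Fin r → ℕ) : A :=
  (List.ofFn fun i : Fin r => yd q x y i.val ^ p i).prod

/-- The divided monomial: `y^{t₁} (y^{(1)})^{t₂} ⋯ (y^{(r-1)})^{t_r} x^t` over its denominator in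
the expansion of `(x + y) ^ N / (N)_q!`. -/
noncomputable def bellTerm (q : k) (x y : A) (s : (Fin r → ℕ) × ℕ) : A :=
  (bellDenom q s.1 * qFact q s.2)⁻¹ʳ • (ydMonomial q x y s.1 * x ^ s.2)

/-- The part of `(N)_q` contributed by the `j`-th block when `N = t + t₁ + 2 t₂ + ⋯ + r t_r` is cut
into blocks of lengths `t, r t_r, …, 2 t₂, t₁`, in this order. -/
def blockWeight (q : k) (j : Fin r) (s : (Fin r → ℕ) × ℕ) : k :=
  q ^ (s.2 + ∑ i > j, (i.val + 1) * s.1 i) * qInt q ((j.val + 1) * s.1 j)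

theorem qInt_eq_add_sum_blockWeight (q : k) {s : (Fin r → ℕ) × ℕ} (hs : s ∈ bellIndex r N) :
    qInt q N = qInt q s.2 + ∑ j, blockWeight q j s := by
  rw [← mem_bellIndex.mp hs, add_comm, qInt_add_sum]
  rfl

theorem bellDenom_add_single (q : k) (p : Fin r → ℕ) (j : Fin r) :
    bellDenom q (p + Pi.single j 1) =
      bellDenom q p * qFact q j * qInt q ((j.val + 1) * (p j + 1)) := by
  have hoff (i) (hi : i ∈ Finset.univ.erase j) : (p + Pi.single j 1 : Fin r → ℕ) i = p i := by
    simp [Finset.ne_of_mem_erase hi]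
  simp only [bellDenom]
  rw [← Finset.mul_prod_erase _ _ (Finset.mem_univ j),
    ← Finset.mul_prod_erase _ _ (Finset.mem_univ j),
    Finset.prod_congr rfl fun i hi => by rw [hoff i hi], Pi.add_apply, Pi.single_eq_same, qInt_mul,
    pow_succ, qFact, qFact]
  ring

theorem blockWeight_absorb (q : k) (j : Fin r) (s : (Fin r → ℕ) × ℕ) :
    blockWeight q j (absorb j s) = q ^ (s.2 - j) *
      q ^ (∑ i > j, (i.val + 1) * s.1 i) * qInt q ((j.val + 1) * (s.1 j + 1)) := by
  have hoff (i) (hi : i ∈ Finset.Ioi j) :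
      (i.val + 1) * (s.1 + Pi.single j 1 : Fin r → ℕ) i = (i.val + 1) * s.1 i := by
    simp [(Finset.mem_Ioi.mp hi).ne']
  simp only [blockWeight, absorb]
  rw [Finset.sum_congr rfl hoff, pow_add, Pi.add_apply, Pi.single_eq_same]

variable {q : k} {x y : A}

theorem bellTerm_mul_x {s : (Fin r → ℕ) × ℕ} (hs : IsUnit (qInt q (s.2 + 1))) :
    bellTerm q x y s * x = qInt q (s.2 + 1) • bellTerm q x y (s.1, s.2 + 1) := by
  simp only [bellTerm, qFact]
  rw [smul_mul_assoc, mul_assoc, ← pow_succ, smul_smul, ← mul_assoc, mul_comm (qInt q _),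
    inverse_mul_mul_cancel_right _ hs]

theorem inverse_bellDenom_add_single_mul {p : Fin r → ℕ} {j : Fin r}
    (hp : IsUnit (qInt q ((j.val + 1) * (p j + 1)))) (c : k) :
    (bellDenom q (p + Pi.single j 1) * c)⁻¹ʳ * qInt q ((j.val + 1) * (p j + 1)) =
      (bellDenom q p)⁻¹ʳ * (qFact q j * c)⁻¹ʳ := by
  rw [bellDenom_add_single, mul_right_comm, inverse_mul_mul_cancel_right _ hp, mul_assoc,
    Ring.mul_inverse_rev, mul_comm]

theorem ydMonomial_mul_yd
    (hcom : ∀ u v, u < v → yd q x y v * yd q x y u = q ^ (v + 1) • (yd q x y u * yd q x y v))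
    (p : Fin r → ℕ) (j : Fin r) :
    ydMonomial q x y p * yd q x y j =
      q ^ (∑ i > j, (i.val + 1) * p i) • ydMonomial q x y (p + Pi.single j 1) := by
  simp only [← Finset.prod_pow_eq_pow_sum, pow_mul]
  exact prod_ofFn_pow_mul_apply (z := fun i : Fin r => yd q x y i) (fun i hi => hcom j i hi) p

theorem bellTerm_mul_y {s : (Fin r → ℕ) × ℕ} (hs : s ∈ bellIndex r N) (hN : N < r)
    (hq : ∀ m, 1 ≤ m → m ≤ N + 1 → IsUnit (qInt q m))
    (hcom : ∀ u v, u < v → yd q x y v * yd q x y u = q ^ (v + 1) • (yd q x y u * yd q x y v)) :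
    bellTerm q x y s * y =
      ∑ j : Fin r with j.val ≤ s.2, blockWeight q j (absorb j s) • bellTerm q x y (absorb j s) := by
  have hdeg := mem_bellIndex.mp hs
  have expand : bellTerm q x y s * y = (bellDenom q s.1)⁻¹ʳ •
      (ydMonomial q x y s.1 * ((qFact q s.2)⁻¹ʳ • (x ^ s.2 * y))) := by
    rw [bellTerm, Ring.mul_inverse_rev, mul_comm (qFact q s.2)⁻¹ʳ, smul_mul_assoc, mul_smul_comm,
      smul_smul, mul_assoc]
  rw [expand, inverse_qFact_smul_pow_mul x y fun m h1 h2 => hq m h1 (by omega),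
    sum_antidiagonal_eq_sum_fin (r := r) (by omega), Finset.mul_sum, Finset.smul_sum]
  refine Finset.sum_congr rfl fun j hj => ?_
  have hunit : IsUnit (qInt q ((j.val + 1) * (s.1 j + 1))) := by
    have hsum := mem_bellIndex.mp (absorb_mem_bellIndex hs (Finset.mem_filter.mp hj).2)
    have hle := succ_mul_apply_le_sum (absorb j s).1 j
    simp only [absorb, Pi.add_apply, Pi.single_eq_same] at hsum hle
    exact hq _ (Nat.mul_pos (Nat.succ_pos _) (Nat.succ_pos _)) (by omega)
  rw [blockWeight_absorb, bellTerm, absorb, mul_smul_comm, mul_smul_comm, ← mul_assoc,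
    ydMonomial_mul_yd hcom, smul_mul_assoc, smul_smul, smul_smul, smul_smul, smul_smul,
    ← inverse_bellDenom_add_single_mul hunit]
  congr 1
  ring

/-- The sum of all divided monomials of degree `N`; it equals `(x + y) ^ N / (N)_q!`. -/
noncomputable def bellSum (r : ℕ) (q : k) (x y : A) (N : ℕ) : A :=
  ∑ s ∈ bellIndex r N, bellTerm q x y s

theorem bellSum_mul_x (hq : ∀ m, 1 ≤ m → m ≤ N + 1 → IsUnit (qInt q m)) :
    bellSum r q x y N * x = ∑ s ∈ bellIndex r (N + 1), qInt q s.2 • bellTerm q x y s := by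
  have hunit {s} (hs : s ∈ bellIndex r N) : IsUnit (qInt q (s.2 + 1)) :=
    hq _ (by omega) (by have := mem_bellIndex.mp hs; omega)
  rw [bellSum, Finset.sum_mul, Finset.sum_congr rfl fun s hs => bellTerm_mul_x (hunit hs),
    sum_bellIndex_add_one fun s => qInt q s.2 • bellTerm q x y s]
  refine Finset.sum_filter_of_ne fun s _ => mt fun h0 => ?_
  rw [h0, qInt_zero, zero_smul]

theorem bellSum_mul_y (hN : N < r) (hq : ∀ m, 1 ≤ m → m ≤ N + 1 → IsUnit (qInt q m))
    (hcom : ∀ u v, u < v → yd q x y v * yd q x y u = q ^ (v + 1) • (yd q x y u * yd q x y v)) :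
    bellSum r q x y N * y =
      ∑ s ∈ bellIndex r (N + 1), (∑ j, blockWeight q j s) • bellTerm q x y s := by
  have vanish (j : Fin r) (s : (Fin r → ℕ) × ℕ) (hs : s.1 j = 0) : blockWeight q j s = 0 := by
    rw [blockWeight, hs, mul_zero, qInt_zero, mul_zero]
  calc bellSum r q x y N * y
      = ∑ s ∈ bellIndex r N, ∑ j : Fin r with j.val ≤ s.2,
          blockWeight q j (absorb j s) • bellTerm q x y (absorb j s) := by
        rw [bellSum, Finset.sum_mul]
        exact Finset.sum_congr rfl fun s hs => bellTerm_mul_y hs hN hq hcom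
    _ = ∑ j : Fin r, ∑ s ∈ bellIndex r N with j.val ≤ s.2,
          blockWeight q j (absorb j s) • bellTerm q x y (absorb j s) :=
        Finset.sum_comm' (by simp [and_comm])
    _ = ∑ j : Fin r, ∑ s ∈ bellIndex r (N + 1), blockWeight q j s • bellTerm q x y s := by
        refine Finset.sum_congr rfl fun j _ => ?_
        rw [sum_bellIndex_absorb j fun s => blockWeight q j s • bellTerm q x y s]
        refine Finset.sum_filter_of_ne fun s _ => mt fun h0 => ?_
        rw [vanish j s h0, zero_smul]
    _ = _ := by
        rw [Finset.sum_comm]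
        simp only [Finset.sum_smul]

theorem add_pow_eq_qFact_smul_bellSum (hN : N ≤ r)
    (hq : ∀ m, 1 ≤ m → m ≤ N → IsUnit (qInt q m))
    (hcom : ∀ u v, u < v → yd q x y v * yd q x y u = q ^ (v + 1) • (yd q x y u * yd q x y v)) :
    (x + y) ^ N = qFact q N • bellSum r q x y N := by
  induction N with
  | zero => simp [bellSum, bellIndex_zero, bellTerm, bellDenom, ydMonomial, qFact]
  | succ N ih =>
    have recursion : bellSum r q x y N * (x + y) = qInt q (N + 1) • bellSum r q x y (N + 1) := by
      rw [mul_add, bellSum_mul_x hq, bellSum_mul_y hN hq hcom, ← Finset.sum_add_distrib, bellSum,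
        Finset.smul_sum]
      refine Finset.sum_congr rfl fun s hs => ?_
      rw [qInt_eq_add_sum_blockWeight q hs, add_smul]
    rw [pow_succ, ih (by omega) fun m h1 h2 => hq m h1 (by omega), smul_mul_assoc, recursion,
      smul_smul, qFact]

end BellTerm

open scoped Ring in
theorem stmt_15_general {k A : Type*} [CommRing k] [Ring A] [Algebra k A]
    (q : k) (n : ℕ) (hq : ∀ m : ℕ, 1 ≤ m → m ≤ n → IsUnit (qInt q m)) (x y : A)
    (hcom : ∀ u v : ℕ, 1 ≤ u → u < v →
      yd q x y (v - 1) * yd q x y (u - 1) = q ^ v • (yd q x y (u - 1) * yd q x y (v - 1))) :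
    (x + y) ^ n =
      ∑ᶠ p ∈ {p : (Fin n → ℕ) × ℕ | (∑ i, (i.val + 1) * p.1 i) + p.2 = n},
        (qFact q n *
            ((∏ i : Fin n, (qFact q (i.val + 1) ^ p.1 i * qFact (q ^ (i.val + 1)) (p.1 i))) *
              qFact q p.2)⁻¹ʳ) •
          ((List.ofFn fun i : Fin n => yd q x y i.val ^ p.1 i).prod * x ^ p.2) := by
  have hset : {p : (Fin n → ℕ) × ℕ | (∑ i, (i.val + 1) * p.1 i) + p.2 = n} = bellIndex n n :=
    Set.ext fun _ => mem_bellIndex.symm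
  rw [hset, finsum_mem_coe_finset, add_pow_eq_qFact_smul_bellSum le_rfl hq fun u v huv =>
    hcom (u + 1) (v + 1) (by omega) (by omega), bellSum, Finset.smul_sum]
  simp only [bellTerm, bellDenom, ydMonomial, smul_smul]

/-- The q-commutative binomial formula (Corollary
`cor:binom-q-comm-Bell-diff-poly`): if `y^{(v−1)} y^{(u−1)} = q^v y^{(u−1)} y^{(v−1)}`
for `1 ≤ u < v`, then `(x+y)^n` expands with q-multinomial coefficients. -/
theorem stmt_15 {k A : Type*} [Field k] [Ring A] [Algebra k A]
    (q : k) (n : ℕ) (hn : 1 ≤ n)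
    (hq : ∀ m : ℕ, 1 ≤ m → m ≤ n → qInt q m ≠ 0)
    (x y : A)
    (hcom : ∀ u v : ℕ, 1 ≤ u → u < v →
      yd q x y (v - 1) * yd q x y (u - 1) = q ^ v • (yd q x y (u - 1) * yd q x y (v - 1))) :
    (x + y) ^ n =
      ∑ᶠ p ∈ {p : (Fin n → ℕ) × ℕ | (∑ i, (i.val + 1) * p.1 i) + p.2 = n},
        (qFact q n /
            ((∏ i : Fin n, (qFact q (i.val + 1) ^ p.1 i * qFact (q ^ (i.val + 1)) (p.1 i))) *
              qFact q p.2)) •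
          ((List.ofFn fun i : Fin n => yd q x y i.val ^ p.1 i).prod * x ^ p.2) := by
  simpa only [div_eq_mul_inv, Ring.inverse_eq_inv] using
    stmt_15_general q n (fun m h1 h2 => (hq m h1 h2).isUnit) x y hcom
end

section
/- Let A be a unital associative algebra over a field of characteristic zero (equivalently, a unital ℚ-algebra) and x, y, h ∈ A with x·y = y·x + h, x·h = h·x and h·y = y·h. Then for every d ≥ 0, (x+y)^d = Σ ((d! / (a!·2^b·b!·c!)) · y^{a}·h^{b}·x^{c}), the sum being over all (a, b, c) ∈ ℕ³ with a + 2b + c = d. -/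
/-!
Let `:(x + y)^m: = ∑ C(m, i) yⁱ xʲ` (over `i + j = m`) be the binomial expansion with every `y`
written to the left of every `x`. Moving one further `x` past the powers of `y` gives
`(x + y) * :(x + y)^m: = :(x + y)^(m + 1): + m h :(x + y)^(m - 1):`.
By induction `(x + y)^d = ∑ M(d, b) hᵇ :(x + y)^(d - 2b):`, where the coefficients satisfy
`M(d + 1, b + 1) = M(d, b + 1) + (d - 2b) M(d, b)`, the recursion for the number of ways to choose
`b` disjoint pairs among `d` points (each pair contracts an `x` and a `y` to `h`).
All coefficients are natural numbers, so the argument takes place in an arbitrary semiring.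
-/

open Finset
open scoped Nat

/-- The number of matchings with `b` edges in the complete graph on `d` vertices: choose the `2 * b`
matched vertices, then one of the `(2 * b - 1)‼` perfect matchings on them. For `b = 0` the
truncated subtraction gives `0‼ = 1`, the intended value. -/
def matchingNumber (d b : ℕ) : ℕ :=
  d.choose (2 * b) * (2 * b - 1)‼

theorem matchingNumber_zero_right (d : ℕ) : matchingNumber d 0 = 1 := by
  simp [matchingNumber]

theorem matchingNumber_eq_zero_of_lt {d b : ℕ} (hdb : d < 2 * b) : matchingNumber d b = 0 := by
  rw [matchingNumber, Nat.choose_eq_zero_of_lt hdb, zero_mul]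

theorem matchingNumber_succ_succ (d b : ℕ) :
    matchingNumber (d + 1) (b + 1) =
      matchingNumber d (b + 1) + (d - 2 * b) * matchingNumber d b := by
  have odd_doubleFactorial : (2 * b + 1)‼ = (2 * b + 1) * (2 * b - 1)‼ :=
    Nat.doubleFactorial_add_one (2 * b)
  have absorption : d.choose (2 * b + 1) * (2 * b + 1) = d.choose (2 * b) * (d - 2 * b) :=
    Nat.choose_succ_right_eq d (2 * b)
  simp only [matchingNumber, show 2 * (b + 1) = 2 * b + 1 + 1 by ring, Nat.add_sub_cancel,
    Nat.choose_succ_succ', odd_doubleFactorial]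
  linear_combination (2 * b - 1)‼ * absorption

theorem sum_range_matchingNumber_succ_nsmul {M : Type*} [AddCommMonoid M] (f : ℕ → M) {d N : ℕ}
    (hdN : d + 1 < 2 * N) :
    ∑ b ∈ range N, matchingNumber (d + 1) b • f b =
      ∑ b ∈ range N, matchingNumber d b • f b +
        ∑ b ∈ range N, ((d - 2 * b) * matchingNumber d b) • f (b + 1) := by
  obtain ⟨n, rfl⟩ : ∃ n, N = n + 1 := ⟨N - 1, by omega⟩
  have last_weight_zero : d - 2 * n = 0 := by omega
  simp only [sum_range_succ' (fun b => matchingNumber _ b • f b), matchingNumber_succ_succ,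
    matchingNumber_zero_right, add_smul, sum_add_distrib]
  rw [sum_range_succ _ n, last_weight_zero, zero_mul, zero_smul, add_zero, add_right_comm]

theorem factorial_two_mul (b : ℕ) : (2 * b)! = 2 ^ b * b ! * (2 * b - 1)‼ := by
  cases b with
  | zero => simp
  | succ b =>
    rw [← Nat.doubleFactorial_two_mul]
    exact Nat.factorial_eq_mul_doubleFactorial (2 * b + 1)

theorem matchingNumber_mul_choose_mul_factorials (a b c : ℕ) :
    matchingNumber (a + 2 * b + c) b * (a + c).choose a * (a ! * 2 ^ b * b ! * c !) =
      (a + 2 * b + c)! := by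
  have matched_or_not :
      (a + 2 * b + c).choose (2 * b) * (a + c)! * (2 * b)! = (a + 2 * b + c)! := by
    rw [show a + 2 * b + c = a + c + 2 * b by ring]
    exact Nat.add_choose_mul_factorial_mul_factorial (a + c) (2 * b)
  have unmatched_split : (a + c).choose a * c ! * a ! = (a + c)! := by
    rw [add_comm a c]
    exact Nat.add_choose_mul_factorial_mul_factorial c a
  rw [← matched_or_not, ← unmatched_split, factorial_two_mul, matchingNumber]
  ring

theorem factorials_dvd_factorial_add_two_mul_add (a b c : ℕ) :
    a ! * 2 ^ b * b ! * c ! ∣ (a + 2 * b + c)! :=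
  Dvd.intro_left _ (matchingNumber_mul_choose_mul_factorials a b c)

theorem matchingNumber_mul_choose_eq_div (a b c : ℕ) :
    matchingNumber (a + 2 * b + c) b * (a + c).choose a =
      (a + 2 * b + c)! / (a ! * 2 ^ b * b ! * c !) :=
  Nat.eq_div_of_mul_eq_left (by positivity) (matchingNumber_mul_choose_mul_factorials a b c)

theorem finsum_mem_add_two_mul_add_eq {M : Type*} [AddCommMonoid M] (f : ℕ × ℕ × ℕ → M) (d : ℕ) :
    ∑ᶠ p ∈ {p : ℕ × ℕ × ℕ | p.1 + 2 * p.2.1 + p.2.2 = d}, f p =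
      ∑ b ∈ range (d / 2 + 1), ∑ ij ∈ antidiagonal (d - 2 * b), f (ij.1, b, ij.2) := by
  rw [sum_sigma', ← finsum_mem_coe_finset]
  refine finsum_mem_eq_of_bijOn (fun p => ⟨p.2.1, p.1, p.2.2⟩) ?_ fun _ _ => rfl
  refine Set.InvOn.bijOn (f' := fun s => (s.2.1, s.1, s.2.2))
    ⟨fun _ _ => rfl, fun _ _ => rfl⟩ ?_ ?_
  · rintro ⟨a, b, c⟩ hp
    simp only [Set.mem_ofPred_eq, mem_coe, mem_sigma, mem_range,
      HasAntidiagonal.mem_antidiagonal] at hp ⊢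
    omega
  · rintro ⟨b, a, c⟩ hs
    simp only [Set.mem_ofPred_eq, mem_coe, mem_sigma, mem_range,
      HasAntidiagonal.mem_antidiagonal] at hs ⊢
    omega

section Semiring

variable {A : Type*} [Semiring A] {x y h : A}

theorem mul_pow_eq_pow_mul_add_nsmul (hxy : x * y = y * x + h) (hhy : Commute h y) (n : ℕ) :
    x * y ^ n = y ^ n * x + n • (h * y ^ (n - 1)) := by
  induction n with
  | zero => simp
  | succ n ih =>
    have lower_pow_mul : n • (h * y ^ (n - 1)) * y = n • (h * y ^ n) := by
      cases n <;> simp [mul_assoc, pow_succ]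
    calc x * y ^ (n + 1)
        = y ^ n * (x * y) + n • (h * y ^ (n - 1)) * y := by
          rw [pow_succ, ← mul_assoc, ih, add_mul, mul_assoc]
      _ = y ^ (n + 1) * x + (h * y ^ n + n • (h * y ^ n)) := by
          rw [hxy, mul_add, ← mul_assoc, ← pow_succ, lower_pow_mul, ← (hhy.pow_right n).eq,
            add_assoc]
      _ = y ^ (n + 1) * x + (n + 1) • (h * y ^ (n + 1 - 1)) := by
          rw [succ_nsmul', Nat.add_sub_cancel]

/-- The normally ordered power `:(x + y)^m:`, that is, the binomial expansion of `(x + y) ^ m` with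
all factors `y` to the left of all factors `x`. -/
def normallyOrderedPow (x y : A) (m : ℕ) : A :=
  ∑ ij ∈ antidiagonal m, m.choose ij.1 • (y ^ ij.1 * x ^ ij.2)

theorem normallyOrderedPow_succ (x y : A) (m : ℕ) :
    normallyOrderedPow x y (m + 1) =
      normallyOrderedPow x y m * x + y * normallyOrderedPow x y m := by
  simp only [normallyOrderedPow, sum_mul, mul_sum]
  rw [sum_antidiagonal_choose_succ_nsmul (fun i j => y ^ i * x ^ j)]
  congr 1 <;> refine sum_congr rfl fun ij hij => ?_
  · rw [smul_mul_assoc, mul_assoc, ← pow_succ]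
  · rw [mul_smul_comm, ← mul_assoc, ← pow_succ',
      Nat.choose_symm_of_eq_add (mem_antidiagonal.1 hij).symm]

theorem sum_antidiagonal_choose_nsmul_nsmul_pow_pred (x y : A) (m : ℕ) :
    ∑ ij ∈ antidiagonal m, m.choose ij.1 • ij.1 • (y ^ (ij.1 - 1) * x ^ ij.2) =
      m • normallyOrderedPow x y (m - 1) := by
  cases m with
  | zero => simp
  | succ m =>
    simp only [Finset.Nat.sum_antidiagonal_succ, zero_smul, smul_zero, zero_add,
      Nat.add_sub_cancel, normallyOrderedPow, smul_sum]
    simp only [smul_smul, Nat.add_one_mul_choose_eq]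

theorem mul_normallyOrderedPow (hxy : x * y = y * x + h) (hhy : Commute h y) (m : ℕ) :
    x * normallyOrderedPow x y m =
      normallyOrderedPow x y m * x + m • (h * normallyOrderedPow x y (m - 1)) := by
  rw [← mul_smul_comm, ← sum_antidiagonal_choose_nsmul_nsmul_pow_pred]
  simp only [normallyOrderedPow, mul_sum, sum_mul, ← sum_add_distrib]
  refine sum_congr rfl fun ij _ => ?_
  rw [mul_smul_comm, ← mul_assoc, mul_pow_eq_pow_mul_add_nsmul hxy hhy, add_mul, smul_add]
  simp only [smul_mul_assoc, mul_smul_comm, mul_assoc, ← pow_succ, ← pow_succ']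

theorem add_mul_normallyOrderedPow (hxy : x * y = y * x + h) (hhy : Commute h y) (m : ℕ) :
    (x + y) * normallyOrderedPow x y m =
      normallyOrderedPow x y (m + 1) + m • (h * normallyOrderedPow x y (m - 1)) := by
  rw [add_mul, mul_normallyOrderedPow hxy hhy, normallyOrderedPow_succ, add_right_comm]

theorem add_mul_pow_mul_normallyOrderedPow (hxy : x * y = y * x + h) (hxh : Commute x h)
    (hhy : Commute h y) (b m : ℕ) :
    (x + y) * (h ^ b * normallyOrderedPow x y m) =
      h ^ b * normallyOrderedPow x y (m + 1) +
        m • (h ^ (b + 1) * normallyOrderedPow x y (m - 1)) := by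
  have commute_pow : Commute (x + y) (h ^ b) := (hxh.add_left hhy.symm).pow_right b
  rw [← mul_assoc, commute_pow.eq, mul_assoc, add_mul_normallyOrderedPow hxy hhy, mul_add,
    mul_smul_comm, ← mul_assoc, ← pow_succ]

theorem add_pow_eq_sum_matchingNumber (hxy : x * y = y * x + h) (hxh : Commute x h)
    (hhy : Commute h y) {d N : ℕ} (hdN : d < 2 * N) :
    (x + y) ^ d =
      ∑ b ∈ range N, matchingNumber d b • (h ^ b * normallyOrderedPow x y (d - 2 * b)) := by
  induction d with
  | zero =>
    have no_contraction (b : ℕ) : matchingNumber 0 (b + 1) = 0 :=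
      matchingNumber_eq_zero_of_lt (by omega)
    obtain ⟨n, rfl⟩ : ∃ n, N = n + 1 := ⟨N - 1, by omega⟩
    simp [sum_range_succ', no_contraction, matchingNumber_zero_right, normallyOrderedPow]
  | succ d ih =>
    have uncontracted (b : ℕ) :
        matchingNumber d b • (h ^ b * normallyOrderedPow x y (d - 2 * b + 1)) =
          matchingNumber d b • (h ^ b * normallyOrderedPow x y (d + 1 - 2 * b)) := by
      rcases lt_or_ge d (2 * b) with hdb | hbd
      · simp only [matchingNumber_eq_zero_of_lt hdb, zero_smul]
      · rw [Nat.sub_add_comm hbd]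
    have contracted_degree (b : ℕ) : d - 2 * b - 1 = d + 1 - 2 * (b + 1) := by omega
    rw [pow_succ', ih (by omega), mul_sum, sum_range_matchingNumber_succ_nsmul _ hdN,
      ← sum_add_distrib]
    refine sum_congr rfl fun b _ => ?_
    rw [mul_smul_comm, add_mul_pow_mul_normallyOrderedPow hxy hxh hhy, smul_add, uncontracted,
      smul_smul, contracted_degree, mul_comm (matchingNumber d b)]

end Semiring

/-- The division takes place in `ℕ` and is exact by `factorials_dvd_factorial_add_two_mul_add`. -/
theorem stmt_17_general {A : Type*} [Semiring A] (x y h : A)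
    (hxy : x * y = y * x + h) (hxh : x * h = h * x) (hhy : h * y = y * h)
    (d : ℕ) :
    (x + y) ^ d =
      ∑ᶠ p ∈ {p : ℕ × ℕ × ℕ | p.1 + 2 * p.2.1 + p.2.2 = d},
        (d ! / (p.1 ! * 2 ^ p.2.1 * p.2.1 ! * p.2.2 !)) •
          (y ^ p.1 * h ^ p.2.1 * x ^ p.2.2) := by
  rw [finsum_mem_add_two_mul_add_eq,
    add_pow_eq_sum_matchingNumber hxy hxh hhy (N := d / 2 + 1) (by omega)]
  refine sum_congr rfl fun b hb => ?_
  rw [normallyOrderedPow, mul_sum, smul_sum]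
  refine sum_congr rfl fun ⟨a, c⟩ hac => ?_
  obtain rfl : d = a + 2 * b + c := by
    rw [mem_range] at hb
    rw [HasAntidiagonal.mem_antidiagonal] at hac
    omega
  rw [mul_smul_comm, smul_smul, ← mul_assoc, ((show Commute h y from hhy).pow_pow b a).eq,
    ← matchingNumber_mul_choose_eq_div, show a + 2 * b + c - 2 * b = a + c by omega]

theorem factorial_div_factorials_nsmul_eq_rat_smul {M : Type*} [AddCommMonoid M] [Module ℚ M]
    {a b c d : ℕ} (hd : a + 2 * b + c = d) (z : M) :
    (d ! / (a ! * 2 ^ b * b ! * c !)) • z =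
      ((d ! : ℚ) / ((a ! : ℚ) * 2 ^ b * (b ! : ℚ) * (c ! : ℚ))) • z := by
  subst hd
  rw [← Nat.cast_smul_eq_nsmul ℚ,
    Nat.cast_div (factorials_dvd_factorial_add_two_mul_add a b c) (by positivity)]
  simp only [Nat.cast_mul, Nat.cast_pow, Nat.cast_ofNat]

/-- Binomial formula in the Heisenberg–Weyl situation over a field of
characteristic zero (i.e. a unital ℚ-algebra): if `x·y = y·x + h` with `h`
commuting with `x` and `y`, then
`(x+y)^d = Σ_{a+2b+c=d} d!/(a!·2^b·b!·c!) · y^a h^b x^c`. -/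
theorem stmt_17 {A : Type*} [Ring A] [Algebra ℚ A] (x y h : A)
    (hxy : x * y = y * x + h) (hxh : x * h = h * x) (hhy : h * y = y * h)
    (d : ℕ) :
    (x + y) ^ d =
      ∑ᶠ p ∈ {p : ℕ × ℕ × ℕ | p.1 + 2 * p.2.1 + p.2.2 = d},
        ((d.factorial : ℚ) /
            ((p.1.factorial : ℚ) * 2 ^ p.2.1 * (p.2.1.factorial : ℚ) *
              (p.2.2.factorial : ℚ))) •
          (y ^ p.1 * h ^ p.2.1 * x ^ p.2.2) := by
  rw [stmt_17_general x y h hxy hxh hhy]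
  exact finsum_mem_congr rfl fun p hp => factorial_div_factorials_nsmul_eq_rat_smul hp _
end

section
/- Let A be a unital associative ring and g, h ∈ A. Set a_k := g·h^k for k ≥ 0. Then for all m, n ≥ 0, g·SH_{m,n}(h,g) = Σ a_{i₀}·a_{i₁}⋯a_{iₙ}, where the sum is over all (i₀, i₁, …, iₙ) ∈ ℕ^{n+1} with i₀ + i₁ + ⋯ + iₙ = m. -/
/-- The shuffle type polynomials `SH_{i,j}(u,v)`: the sum of all products of `i`
copies of `u` and `j` copies of `v`. -/
def SH {A : Type*} [Ring A] (u v : A) : ℕ → ℕ → A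
  | 0, 0 => 1
  | i + 1, 0 => u * SH u v i 0
  | 0, j + 1 => v * SH u v 0 j
  | i + 1, j + 1 => u * SH u v i (j + 1) + v * SH u v (i + 1) j

section RunLengths

open Finset.HasAntidiagonal (antidiagonal)

theorem sum_antidiagonalTuple_succ {M : Type*} [AddCommMonoid M] (k n : ℕ)
    (f : (Fin (k + 1) → ℕ) → M) :
    ∑ i ∈ Finset.Nat.antidiagonalTuple (k + 1) n, f i =
      ∑ p ∈ antidiagonal n, ∑ t ∈ Finset.Nat.antidiagonalTuple k p.2, f (Fin.cons p.1 t) := by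
  -- `List.Nat.antidiagonalTuple` is defined by this recursion, with `flatMap` for the outer sum.
  change (((List.Nat.antidiagonal n).flatMap fun p =>
      (List.Nat.antidiagonalTuple k p.2).map (Fin.cons p.1)).map f).sum =
    ((List.Nat.antidiagonal n).map fun p =>
      ((List.Nat.antidiagonalTuple k p.2).map fun t => f (Fin.cons p.1 t)).sum).sum
  rw [List.map_flatMap, List.flatMap_def, List.sum_flatten]
  simp only [List.map_map, Function.comp_def]

variable {A : Type*} [Ring A] (u v : A)

theorem SH_zero_right (m : ℕ) : SH u v m 0 = u ^ m := by
  induction m with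
  | zero => rw [SH, pow_zero]
  | succ m ih => rw [SH, ih, pow_succ']

/-- The term at `p` collects the words whose leftmost `v` is preceded by exactly `p.1`
letters `u`. -/
theorem SH_succ_right (m n : ℕ) :
    SH u v m (n + 1) = ∑ p ∈ antidiagonal m, u ^ p.1 * (v * SH u v p.2 n) := by
  induction m with
  | zero => simp [SH]
  | succ m ih =>
    rw [SH, ih, Finset.Nat.sum_antidiagonal_succ, Finset.mul_sum, add_comm]
    simp only [pow_zero, one_mul, pow_succ', mul_assoc]

/-- A word with `n` letters `v` is determined by the lengths `i 0, …, i n` of the runs of `u`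
that they separate. -/
theorem SH_eq_sum_antidiagonalTuple (m n : ℕ) :
    SH u v m n = ∑ i ∈ Finset.Nat.antidiagonalTuple (n + 1) m,
      u ^ i 0 * (List.ofFn fun j : Fin n => v * u ^ i j.succ).prod := by
  induction n generalizing m with
  | zero => simp [SH_zero_right]
  | succ n ih =>
    calc
      SH u v m (n + 1) = ∑ p ∈ antidiagonal m, u ^ p.1 * (v * SH u v p.2 n) :=
        SH_succ_right u v m n
      _ = ∑ p ∈ antidiagonal m, ∑ t ∈ Finset.Nat.antidiagonalTuple (n + 1) p.2,
            u ^ p.1 * (List.ofFn fun j : Fin (n + 1) => v * u ^ t j).prod := by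
        simp only [ih, Finset.mul_sum, List.ofFn_succ, List.prod_cons, mul_assoc]
      _ = ∑ i ∈ Finset.Nat.antidiagonalTuple (n + 2) m,
            u ^ i 0 * (List.ofFn fun j : Fin (n + 1) => v * u ^ i j.succ).prod := by
        simp only [sum_antidiagonalTuple_succ (n + 1), Fin.cons_zero, Fin.cons_succ]

end RunLengths

/-- Relation with the noncommutative Faà di Bruno polynomials: with
`a_k := g·h^k`, one has `g·SH_{m,n}(h,g) = Σ_{i₀+⋯+iₙ=m} a_{i₀} a_{i₁} ⋯ a_{iₙ}`. -/
theorem stmt_18 {A : Type*} [Ring A] (g h : A) (m n : ℕ) :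
    g * SH h g m n =
      ∑ i ∈ Finset.Nat.antidiagonalTuple (n + 1) m,
        (List.ofFn fun j : Fin (n + 1) => g * h ^ i j).prod := by
  simp only [SH_eq_sum_antidiagonalTuple, Finset.mul_sum, List.ofFn_succ, List.prod_cons, mul_assoc]
end
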